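/- arXiv:1512.05752 — 8 statements merged into one kernel-verified Lean document; each statement's English description precedes it below -/
import Mathlib

section
/- Let L be a finite-dimensional solvable Leibniz algebra over a field F with φ(L) = 0 which is minimally non-supersolvable and is not a Lie algebra, write L = A + H with A the unique minimal ideal (A = Leib(L)) and H a complementing Lie subalgebra, and let C be the companion Lie algebra on the vector space A ⊕ H with product [a+h, b+k] = hb − ka + hk. Then C is a solvable Lie algebra with φ(C) = 0, C is not supersolvable, and every proper subalgebra of C is supersolvable (so C is minimally non-supersolvable). -/
/-!
Basic theory of (left) Leibniz algebras, formalized over an arbitrary field `F`.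
A Leibniz algebra structure on an `F`-vector space `L` is given by a bilinear
multiplication `m : L →ₗ[F] L →ₗ[F] L` satisfying the left Leibniz identity.
-/

open Submodule Module

section LeibnizDefs

variable {F : Type*} [Field F] {L : Type*} [AddCommGroup L] [Module F L]
variable (m : L →ₗ[F] L →ₗ[F] L)

/-- The left Leibniz identity: `a(bc) = (ab)c + b(ac)`. -/
def IsLeibniz : Prop :=
  ∀ a b c : L, m a (m b c) = m (m a b) c + m b (m a c)

/-- The multiplication is antisymmetric, i.e. the algebra is a Lie algebra. -/
def IsLie : Prop := ∀ a b : L, m a b = - m b a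

/-- The product of two subspaces: the span of all products `x·y`, `x ∈ P`, `y ∈ Q`. -/
abbrev mprod (P Q : Submodule F L) : Submodule F L := Submodule.map₂ m P Q

/-- A subalgebra: a subspace closed under multiplication. -/
def IsSubalg (S : Submodule F L) : Prop := ∀ x ∈ S, ∀ y ∈ S, m x y ∈ S

/-- An ideal of `L`: a subspace `I` with `L·I ⊆ I` and `I·L ⊆ I`. -/
def IsIdeal (I : Submodule F L) : Prop :=
  ∀ (x : L), ∀ y ∈ I, m x y ∈ I ∧ m y x ∈ I

/-- An ideal `I` of a subalgebra `S`. -/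
def IsIdealOf (S I : Submodule F L) : Prop :=
  I ≤ S ∧ ∀ x ∈ S, ∀ y ∈ I, m x y ∈ I ∧ m y x ∈ I

/-- A minimal ideal: a nonzero ideal containing no nonzero proper subideal of `L`. -/
def IsMinIdeal (A : Submodule F L) : Prop :=
  IsIdeal m A ∧ A ≠ ⊥ ∧ ∀ J, IsIdeal m J → J ≤ A → J = ⊥ ∨ J = A

/-- The derived series of a subspace: `S^(0) = S`, `S^(n+1) = S^(n)·S^(n)`. -/
def derSeries (S : Submodule F L) : ℕ → Submodule F L
  | 0 => S
  | n + 1 => mprod m (derSeries S n) (derSeries S n)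

/-- A subalgebra is solvable if its derived series reaches `0`. -/
def IsSolvableSub (S : Submodule F L) : Prop := ∃ n, derSeries m S n = ⊥

/-- The Leibniz algebra `L` is solvable. -/
abbrev IsSolvableAlg : Prop := IsSolvableSub m (⊤ : Submodule F L)

/-- The lower central series of a subspace: `N^1 = N`, `N^(k+1) = N·N^k`. -/
def lcSeries (N : Submodule F L) : ℕ → Submodule F L
  | 0 => N
  | k + 1 => mprod m N (lcSeries N k)

/-- A subalgebra is nilpotent if its lower central series reaches `0`. -/
def IsNilpotentSub (N : Submodule F L) : Prop := ∃ k, lcSeries m N k = ⊥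

/-- A subalgebra `S` is strongly solvable if `S² = S·S` is nilpotent. -/
def IsStronglySolvable (S : Submodule F L) : Prop :=
  IsNilpotentSub m (mprod m S S)

/-- A maximal subalgebra: a proper subalgebra not contained in any larger proper
subalgebra. -/
def IsMaxSubalg (S : Submodule F L) : Prop :=
  IsSubalg m S ∧ S ≠ ⊤ ∧ ∀ T, IsSubalg m T → S ≤ T → T = S ∨ T = ⊤

/-- The Frattini subalgebra `F(L)`: the intersection of all maximal subalgebras. -/
def frattiniSub : Submodule F L := sInf {S | IsMaxSubalg m S}

/-- The Frattini ideal `φ(L)`: the largest ideal contained in the Frattini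
subalgebra. -/
def frattiniIdeal : Submodule F L :=
  sSup {I | IsIdeal m I ∧ I ≤ frattiniSub m}

/-- `Leib(L)`: the span of all squares `x·x`. -/
def leibIdeal : Submodule F L := Submodule.span F {z | ∃ x : L, z = m x x}

/-- The subalgebra generated by a set. -/
def genBy (s : Set L) : Submodule F L := sInf {S | IsSubalg m S ∧ s ⊆ S}

/-- A subalgebra is two-generated if it is generated as an algebra by two elements. -/
def TwoGenerated (S : Submodule F L) : Prop := ∃ x y : L, genBy m {x, y} = S

/-- A subalgebra `S` is supersolvable if there is a chain of ideals of `S`,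
`0 = S₀ ⊂ S₁ ⊂ ⋯ ⊂ Sₙ = S`, with `dim Sᵢ = i`. -/
def IsSupersolvable (S : Submodule F L) : Prop :=
  ∃ (n : ℕ) (c : ℕ → Submodule F L), c 0 = ⊥ ∧ c n = S ∧
    (∀ i, i < n → c i ≤ c (i + 1)) ∧
    (∀ i, i ≤ n → IsIdealOf m S (c i)) ∧
    (∀ i, i ≤ n → Module.finrank F (c i) = i)

/-- A subspace `S` is nil on `L` if left multiplication by each of its elements is a
nilpotent operator. -/
def IsNilOn (S : Submodule F L) : Prop :=
  ∀ x ∈ S, IsNilpotent (m x : Module.End F L)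

open scoped TensorProduct in
/-- A subspace `S` is triangulable on `L` if, after extending scalars to the algebraic
closure `K` of `F`, the space `K ⊗ L` admits a basis with respect to which the left
multiplication operators by all elements of `K ⊗ S` are upper triangular matrices.
(Since upper triangular matrices form a `K`-subspace of matrices, it suffices that the
base-changed left multiplication by each `x ∈ S` is upper triangular.) -/
def IsTriangulableOn (S : Submodule F L) : Prop :=
  ∃ (n : ℕ) (b : Basis (Fin n) (AlgebraicClosure F) ((AlgebraicClosure F) ⊗[F] L)),
    ∀ x ∈ S, ∀ i j : Fin n, j < i →
      LinearMap.toMatrix b b (LinearMap.baseChange (AlgebraicClosure F) (m x)) i j = 0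

end LeibnizDefs

section Helpers

variable {F : Type*} [Field F] {L : Type*} [AddCommGroup L] [Module F L]

/-- One step in a chain of ideals of `S`. -/
def StepR (m : L →ₗ[F] L →ₗ[F] L) (S U V : Submodule F L) : Prop :=
  U ≤ V ∧ finrank F V ≤ finrank F U + 1 ∧ IsIdealOf m S V

theorem isIdealOf_bot (m : L →ₗ[F] L →ₗ[F] L) (S : Submodule F L) : IsIdealOf m S ⊥ := by
  refine ⟨bot_le, ?_⟩
  intro x _ y hy
  rw [Submodule.mem_bot] at hy
  subst hy
  simp

theorem chain_of_super {m : L →ₗ[F] L →ₗ[F] L} {S : Submodule F L}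
    (h : IsSupersolvable m S) : Relation.ReflTransGen (StepR m S) ⊥ S := by
  obtain ⟨n, c, h0, hn, hle, hid, hdim⟩ := h
  have key : ∀ i, i ≤ n → Relation.ReflTransGen (StepR m S) ⊥ (c i) := by
    intro i
    induction i with
    | zero => intro _; rw [h0]
    | succ k ih =>
      intro hk
      refine (ih (by omega)).tail ⟨hle k (by omega), ?_, hid _ hk⟩
      rw [hdim _ hk, hdim k (by omega)]
  rw [← hn] at *
  exact key n le_rfl

theorem super_of_chain [FiniteDimensional F L] {m : L →ₗ[F] L →ₗ[F] L} {S : Submodule F L}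
    (h : Relation.ReflTransGen (StepR m S) ⊥ S) : IsSupersolvable m S := by
  have key : ∀ V, Relation.ReflTransGen (StepR m S) ⊥ V →
      ∃ (n : ℕ) (c : ℕ → Submodule F L), c 0 = ⊥ ∧ c n = V ∧
        (∀ i, i < n → c i ≤ c (i + 1)) ∧
        (∀ i, i ≤ n → IsIdealOf m S (c i)) ∧
        (∀ i, i ≤ n → Module.finrank F (c i) = i) := by
    intro V hV
    induction hV with
    | refl =>
      refine ⟨0, fun _ => ⊥, rfl, rfl, fun _ _ => le_rfl, fun _ _ => isIdealOf_bot m S, ?_⟩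
      intro i hi
      simp [Nat.le_zero.mp hi]
    | @tail U V _ hUV ih =>
      obtain ⟨n, c, h0, hn, hle, hid, hdim⟩ := ih
      obtain ⟨hUV1, hUV2, hUV3⟩ := hUV
      have hU : finrank F U = n := by rw [← hn]; exact hdim n le_rfl
      by_cases hd : finrank F V ≤ finrank F U
      · have : U = V := Submodule.eq_of_le_of_finrank_le hUV1 hd
        subst this
        exact ⟨n, c, h0, hn, hle, hid, hdim⟩
      · refine ⟨n + 1, fun i => if i ≤ n then c i else V, by simp [h0], by simp, ?_, ?_, ?_⟩
        · intro i hi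
          by_cases h1 : i + 1 ≤ n
          · simp only [h1, show i ≤ n by omega, if_true]
            exact hle i (by omega)
          · have : i = n := by omega
            subst this
            simpa [hn] using hUV1
        · intro i hi
          by_cases h1 : i ≤ n
          · simpa [h1] using hid i h1
          · simpa [h1] using hUV3
        · intro i hi
          by_cases h1 : i ≤ n
          · change finrank F ↥(if i ≤ n then c i else V) = i
            rw [if_pos h1]
            exact hdim i h1
          · have : i = n + 1 := by omega
            subst this
            change finrank F ↥(if n + 1 ≤ n then c (n + 1) else V) = n + 1
            rw [if_neg h1]
            omega
  exact key S h

theorem chain_inf [FiniteDimensional F L] {m₁ m₂ : L →ₗ[F] L →ₗ[F] L}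
    {S T B U V : Submodule F L}
    (hB : ∀ J, IsIdealOf m₁ S J → IsIdealOf m₂ T (J ⊓ B))
    (h : Relation.ReflTransGen (StepR m₁ S) U V) :
    Relation.ReflTransGen (StepR m₂ T) (U ⊓ B) (V ⊓ B) := by
  refine Relation.ReflTransGen.lift (fun J => J ⊓ B) ?_ _ _ h
  rintro P Q ⟨h1, h2, h3⟩
  refine ⟨inf_le_inf_right _ h1, ?_, hB _ h3⟩
  have e1 := Submodule.finrank_sup_add_finrank_inf_eq P B
  have e2 := Submodule.finrank_sup_add_finrank_inf_eq Q B
  have e3 := Submodule.finrank_mono (sup_le_sup_right h1 B)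
  change finrank F ↥(Q ⊓ B) ≤ finrank F ↥(P ⊓ B) + 1
  omega

theorem chain_sup [FiniteDimensional F L] {m₁ m₂ : L →ₗ[F] L →ₗ[F] L}
    {S T B U V : Submodule F L}
    (hB : ∀ J, IsIdealOf m₁ S J → IsIdealOf m₂ T (J ⊔ B))
    (h : Relation.ReflTransGen (StepR m₁ S) U V) :
    Relation.ReflTransGen (StepR m₂ T) (U ⊔ B) (V ⊔ B) := by
  refine Relation.ReflTransGen.lift (fun J => J ⊔ B) ?_ _ _ h
  rintro P Q ⟨h1, h2, h3⟩
  refine ⟨sup_le_sup_right h1 _, ?_, hB _ h3⟩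
  have e1 := Submodule.finrank_sup_add_finrank_inf_eq P B
  have e2 := Submodule.finrank_sup_add_finrank_inf_eq Q B
  have e3 := Submodule.finrank_mono (inf_le_inf_right B h1)
  change finrank F ↥(Q ⊔ B) ≤ finrank F ↥(P ⊔ B) + 1
  omega

theorem transfer_super [FiniteDimensional F L] {m₁ m₂ : L →ₗ[F] L →ₗ[F] L}
    {A T : Submodule F L} (hAT : A ≤ T)
    (hA : IsIdeal m₂ A)
    (hd : ∀ x y, m₂ x y - m₁ x y ∈ A)
    (hinf : ∀ J, IsIdealOf m₁ T J → IsIdealOf m₂ T (J ⊓ A))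
    (h : IsSupersolvable m₁ T) : IsSupersolvable m₂ T := by
  have h1 := chain_inf (B := A) hinf (chain_of_super h)
  have hsup : ∀ J, IsIdealOf m₁ T J → IsIdealOf m₂ T (J ⊔ A) := by
    intro J hJ
    refine ⟨sup_le hJ.1 hAT, ?_⟩
    intro x hx y hy
    obtain ⟨j, hj, a, ha, rfl⟩ := Submodule.mem_sup.mp hy
    obtain ⟨p, q⟩ := hJ.2 x hx j hj
    constructor
    · have : m₂ x (j + a) = m₁ x j + ((m₂ x j - m₁ x j) + m₂ x a) := by
        rw [map_add]; abel
      rw [this]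
      exact Submodule.add_mem_sup p (A.add_mem (hd _ _) (hA x a ha).1)
    · have : m₂ (j + a) x = m₁ j x + ((m₂ j x - m₁ j x) + m₂ a x) := by
        rw [map_add, LinearMap.add_apply]; abel
      rw [this]
      exact Submodule.add_mem_sup q (A.add_mem (hd _ _) (hA x a ha).2)
  have h2 := chain_sup (B := A) hsup (chain_of_super h)
  rw [bot_inf_eq, inf_eq_right.mpr hAT] at h1
  rw [bot_sup_eq, sup_eq_left.mpr hAT] at h2
  exact super_of_chain (h1.trans h2)

theorem exists_minIdeal [FiniteDimensional F L] (m : L →ₗ[F] L →ₗ[F] L) :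
    ∀ (n : ℕ) (I : Submodule F L), finrank F I ≤ n → IsIdeal m I → I ≠ ⊥ →
      ∃ J, J ≤ I ∧ IsMinIdeal m J := by
  intro n
  induction n with
  | zero =>
    intro I hI _ hne
    exact absurd (Submodule.finrank_eq_zero.mp (Nat.le_zero.mp hI)) hne
  | succ n ih =>
    intro I hI hid hne
    by_cases hmin : IsMinIdeal m I
    · exact ⟨I, le_rfl, hmin⟩
    · have : ∃ J, IsIdeal m J ∧ J ≤ I ∧ J ≠ ⊥ ∧ J ≠ I := by
        by_contra hcon
        apply hmin
        refine ⟨hid, hne, ?_⟩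
        intro J hJ hJI
        by_contra hc
        exact hcon ⟨J, hJ, hJI, fun h => hc (Or.inl h), fun h => hc (Or.inr h)⟩
      obtain ⟨J, hJ, hJI, hJ0, hJne⟩ := this
      have hlt := Submodule.finrank_lt_finrank_of_lt (lt_of_le_of_ne hJI hJne)
      obtain ⟨K, hK, hKm⟩ := ih J (by omega) hJ hJ0
      exact ⟨K, hK.trans hJI, hKm⟩

end Helpers

/-- Let `L` be a finite-dimensional solvable Leibniz algebra with
`φ(L) = 0` which is minimally non-supersolvable and not a Lie algebra. Write
`L = A + H` with `A` the unique minimal ideal (`A = Leib(L)`) and `H` a complementing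
Lie subalgebra, and let `C` be the companion Lie algebra on the same vector space, with
product `[a+h, b+k] = hb − ka + hk` (given here by the bilinear map `m'`). Then `C` is a
solvable Lie algebra with `φ(C) = 0`, `C` is not supersolvable, and every proper
subalgebra of `C` is supersolvable (so `C` is minimally non-supersolvable). -/
theorem companion_of_minimally_non_supersolvable
    {F : Type*} [Field F] {L : Type*} [AddCommGroup L] [Module F L]
    [FiniteDimensional F L]
    (m : L →ₗ[F] L →ₗ[F] L) (hm : IsLeibniz m)
    (hsolv : IsSolvableAlg m)
    (hphi : frattiniIdeal m = ⊥)
    (hnotsuper : ¬ IsSupersolvable m (⊤ : Submodule F L))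
    (hproper : ∀ S : Submodule F L, IsSubalg m S → S ≠ ⊤ → IsSupersolvable m S)
    (hnotLie : ¬ IsLie m)
    (A H : Submodule F L)
    (hmin : IsMinIdeal m A) (huniq : ∀ A', IsMinIdeal m A' → A' = A)
    (hleib : A = leibIdeal m)
    (hH : IsSubalg m H) (hHLie : ∀ h ∈ H, ∀ k ∈ H, m h k = - m k h)
    (hdisj : A ⊓ H = ⊥) (hsum : A ⊔ H = ⊤)
    (m' : L →ₗ[F] L →ₗ[F] L)
    (hm' : ∀ a ∈ A, ∀ h ∈ H, ∀ b ∈ A, ∀ k ∈ H,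
      m' (a + h) (b + k) = m h b - m k a + m h k) :
    IsLie m' ∧ IsLeibniz m' ∧ IsSolvableAlg m' ∧
    frattiniIdeal m' = ⊥ ∧
    ¬ IsSupersolvable m' (⊤ : Submodule F L) ∧
    (∀ S : Submodule F L, IsSubalg m' S → S ≠ ⊤ → IsSupersolvable m' S) := by
  have hAl : ∀ a ∈ A, ∀ x, m a x = 0 := by
    intro a ha x
    rw [hleib] at ha
    induction ha using Submodule.span_induction with
    | mem z hz =>
      obtain ⟨y, rfl⟩ := hz
      have := hm y y x
      simpa using this
    | zero => simp
    | add u v _ _ hu hv => simp [hu, hv]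
    | smul r u _ hu => simp [hu]
  have hAid := hmin.1
  have dec : ∀ x : L, ∃ a ∈ A, ∃ h ∈ H, x = a + h := by
    intro x
    have hx : x ∈ A ⊔ H := by rw [hsum]; trivial
    obtain ⟨a, ha, h, hh, e⟩ := Submodule.mem_sup.mp hx
    exact ⟨a, ha, h, hh, e.symm⟩
  have hmf : ∀ a ∈ A, ∀ h, ∀ y, m (a + h) y = m h y := by
    intro a ha h y
    simp [hAl a ha]
  have lie' : IsLie m' := by
    intro x y
    obtain ⟨a, ha, h, hh, rfl⟩ := dec x
    obtain ⟨b, hb, k, hk, rfl⟩ := dec y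
    rw [hm' a ha h hh b hb k hk, hm' b hb k hk a ha h hh, hHLie h hh k hk]
    abel
  have d1 : ∀ x y, m' x y - m x y ∈ A := by
    intro x y
    obtain ⟨a, ha, h, hh, rfl⟩ := dec x
    obtain ⟨b, hb, k, hk, rfl⟩ := dec y
    rw [hm' a ha h hh b hb k hk, hmf a ha, map_add]
    have : m h b - m k a + m h k - (m h b + m h k) = - m k a := by abel
    rw [this]
    exact A.neg_mem (hAid k a ha).1
  have d2 : ∀ x, ∀ a ∈ A, m' x a = m x a := by
    intro x b hb
    obtain ⟨a, ha, h, hh, rfl⟩ := dec x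
    have := hm' a ha h hh b hb 0 H.zero_mem
    simp only [add_zero, map_zero, LinearMap.zero_apply, sub_zero] at this
    rw [this, hmf a ha]
  have hHH : ∀ h ∈ H, ∀ k ∈ H, m' h k = m h k := by
    intro h hh k hk
    have := hm' 0 A.zero_mem h hh 0 A.zero_mem k hk
    simpa using this
  have d3 : ∀ a ∈ A, ∀ x, m' a x = - m x a := by
    intro a ha x
    rw [lie' a x, d2 x a ha]
  have hAid' : IsIdeal m' A := by
    intro x y hy
    rw [d2 x y hy, d3 y hy x]
    exact ⟨(hAid x y hy).1, A.neg_mem (hAid x y hy).1⟩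
  have leib' : IsLeibniz m' := by
    intro x y z
    obtain ⟨a, ha, h, hh, rfl⟩ := dec x
    obtain ⟨b, hb, k, hk, rfl⟩ := dec y
    obtain ⟨c, hc, l, hl, rfl⟩ := dec z
    have mem : ∀ u, ∀ v ∈ A, m u v ∈ A := fun u v hv => (hAid u v hv).1
    rw [hm' b hb k hk c hc l hl, hm' a ha h hh b hb k hk, hm' a ha h hh c hc l hl,
      hm' a ha h hh _ (A.sub_mem (mem k c hc) (mem l b hb)) _ (hH k hk l hl),
      hm' _ (A.sub_mem (mem h b hb) (mem k a ha)) _ (hH h hh k hk) c hc l hl,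
      hm' b hb k hk _ (A.sub_mem (mem h c hc) (mem l a ha)) _ (hH h hh l hl)]
    simp only [map_sub]
    rw [hm h k c, hm h l b, hm h k l, hm k l a]
    abel
  have solv' : IsSolvableAlg m' := by
    obtain ⟨n, hn⟩ := hsolv
    have key : ∀ n, derSeries m' ⊤ n ≤ derSeries m ⊤ n ⊔ A := by
      intro n
      induction n with
      | zero => exact le_sup_left
      | succ n ih =>
        change Submodule.map₂ m' _ _ ≤ Submodule.map₂ m _ _ ⊔ A
        rw [Submodule.map₂_le]
        intro x hx y hy
        obtain ⟨d, hd, a, ha, rfl⟩ := Submodule.mem_sup.mp (ih hx)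
        obtain ⟨e, he, b, hb, rfl⟩ := Submodule.mem_sup.mp (ih hy)
        have : m' (d + a) (e + b) = m d e + (m d b +
            (m' (d + a) (e + b) - m (d + a) (e + b))) := by
          have : m (d + a) (e + b) = m d e + m d b := by
            rw [add_comm d a, hmf a ha, map_add]
          rw [this]; abel
        rw [this]
        exact Submodule.add_mem_sup (Submodule.apply_mem_map₂ _ hd he)
          (A.add_mem (hAid d b hb).1 (d1 _ _))
    refine ⟨n + 1, ?_⟩
    have hle := key n
    rw [hn, bot_sup_eq] at hle
    rw [eq_bot_iff]
    change Submodule.map₂ m' _ _ ≤ _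
    rw [Submodule.map₂_le]
    intro x hx y hy
    rw [d2 x y (hle hy), hAl x (hle hx)]
    exact Submodule.zero_mem _
  -- an `H`-invariant subspace of `A` is trivial
  have hirr : ∀ J, J ≤ A → (∀ h ∈ H, ∀ y ∈ J, m h y ∈ J) → J = ⊥ ∨ J = A := by
    intro J hJA hJ
    refine hmin.2.2 J ?_ hJA
    intro x y hy
    obtain ⟨a, ha, h, hh, rfl⟩ := dec x
    rw [hmf a ha, hAl y (hJA hy)]
    exact ⟨hJ h hh y hy, J.zero_mem⟩
  have hHtop : H ≠ ⊤ := by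
    intro h
    apply hmin.2.1
    rw [h, inf_top_eq] at hdisj
    exact hdisj
  have hHmax : IsMaxSubalg m' H := by
    refine ⟨?_, hHtop, ?_⟩
    · intro x hx y hy
      rw [hHH x hx y hy]
      exact hH x hx y hy
    · intro T hT hHT
      rcases hirr (T ⊓ A) inf_le_right (by
        intro h hh y hy
        refine ⟨?_, (hAid h y hy.2).1⟩
        rw [← d2 h y hy.2]
        exact hT h (hHT hh) y hy.1) with h0 | h1
      · left
        refine le_antisymm ?_ hHT
        intro x hx
        obtain ⟨a, ha, h, hh, rfl⟩ := dec x
        have haT : a ∈ T := by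
          have := T.sub_mem hx (hHT hh)
          simpa using this
        have : a ∈ T ⊓ A := ⟨haT, ha⟩
        rw [h0, Submodule.mem_bot] at this
        simpa [this] using hh
      · right
        rw [eq_top_iff, ← hsum]
        exact sup_le (inf_eq_right.mp h1) hHT
  have frat' : frattiniIdeal m' = ⊥ := by
    rw [eq_bot_iff]
    refine sSup_le ?_
    rintro I ⟨hI, hIF⟩
    have hIH : I ≤ H := hIF.trans (sInf_le hHmax)
    by_contra hne
    have hIA : ∀ i ∈ I, ∀ a ∈ A, m i a = 0 := by
      intro i hi a ha
      have : m' i a ∈ A ⊓ H := ⟨(hAid' i a ha).1, hIH (hI a i hi).2⟩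
      rw [hdisj, Submodule.mem_bot, d2 i a ha] at this
      exact this
    have hIm : IsIdeal m I := by
      intro x y hy
      obtain ⟨a, ha, h, hh, rfl⟩ := dec x
      rw [hmf a ha, map_add, hIA y hy a ha, zero_add, ← hHH h hh y (hIH hy),
        ← hHH y (hIH hy) h hh]
      exact hI h y hy
    obtain ⟨J, hJI, hJ⟩ := exists_minIdeal m _ I le_rfl hIm (fun h => hne (h ▸ le_rfl))
    have := huniq J hJ
    subst this
    apply hJ.2.1
    rw [← hdisj]
    exact (inf_eq_left.mpr (hJI.trans hIH)).symm
  have inf1 : ∀ T J, IsIdealOf m T J → IsIdealOf m' T (J ⊓ A) := by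
    intro T J hJ
    refine ⟨inf_le_left.trans hJ.1, ?_⟩
    intro x hx y hy
    have : m x y ∈ J ⊓ A := ⟨(hJ.2 x hx y hy.1).1, (hAid x y hy.2).1⟩
    rw [d2 x y hy.2, d3 y hy.2 x]
    exact ⟨this, Submodule.neg_mem _ this⟩
  have inf2 : ∀ T J, IsIdealOf m' T J → IsIdealOf m T (J ⊓ A) := by
    intro T J hJ
    refine ⟨inf_le_left.trans hJ.1, ?_⟩
    intro x hx y hy
    rw [hAl y hy.2, ← d2 x y hy.2]
    exact ⟨⟨(hJ.2 x hx y hy.1).1, (hAid' x y hy.2).1⟩, Submodule.zero_mem _⟩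
  have d1' : ∀ x y, m x y - m' x y ∈ A := by
    intro x y
    rw [← neg_sub]
    exact A.neg_mem (d1 x y)
  refine ⟨lie', leib', solv', frat', ?_, ?_⟩
  · intro h
    exact hnotsuper (transfer_super le_top hAid d1' (inf2 ⊤) h)
  · intro S hS hSt
    by_cases hSA : S ⊔ A = ⊤
    · -- `S` is a complement of `A`
      have h0 : S ⊓ A = ⊥ := by
        rcases hirr (S ⊓ A) inf_le_right (by
          intro h hh y hy
          refine ⟨?_, (hAid h y hy.2).1⟩
          have hx : h ∈ S ⊔ A := by rw [hSA]; trivial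
          obtain ⟨s, hs, a, ha, rfl⟩ := Submodule.mem_sup.mp hx
          rw [add_comm, hmf a ha, ← d2 s y hy.2]
          exact hS s hs y hy.1) with h0 | h1
        · exact h0
        · exfalso
          apply hSt
          rw [← hSA]
          exact (sup_eq_left.mpr (inf_eq_right.mp h1)).symm
      have c1 := chain_of_super (hproper H hH hHtop)
      have c2 := chain_sup (m₂ := m') (T := ⊤) (B := A) (by
        intro J hJ
        refine ⟨le_top, ?_⟩
        have one : ∀ x, ∀ y ∈ J ⊔ A, m' x y ∈ J ⊔ A := by
          intro x y hy
          obtain ⟨j, hj, b, hb, rfl⟩ := Submodule.mem_sup.mp hy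
          obtain ⟨a, ha, h, hh, rfl⟩ := dec x
          rw [add_comm j b, hm' a ha h hh b hb j (hJ.1 hj), add_comm]
          exact Submodule.add_mem_sup (hJ.2 h hh j hj).1
            (A.sub_mem (hAid h b hb).1 (hAid j a ha).1)
        intro x _ y hy
        refine ⟨one x y hy, ?_⟩
        rw [lie' y x]
        exact Submodule.neg_mem _ (one x y hy)) c1
      have c3 := chain_inf (m₂ := m') (T := S) (B := S) (by
        intro J hJ
        refine ⟨inf_le_right, ?_⟩
        intro x hx y hy
        obtain ⟨p, q⟩ := hJ.2 x trivial y hy.1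
        exact ⟨⟨p, hS x hx y hy.2⟩, ⟨q, hS y hy.2 x hx⟩⟩) c2
      rw [bot_sup_eq, inf_comm, h0, sup_comm, hsum, top_inf_eq] at c3
      exact super_of_chain c3
    · have hsub : IsSubalg m (S ⊔ A) := by
        intro x hx y hy
        obtain ⟨s, hs, a, ha, rfl⟩ := Submodule.mem_sup.mp hx
        obtain ⟨t, ht, b, hb, rfl⟩ := Submodule.mem_sup.mp hy
        have : m (s + a) (t + b) = m' s t + ((m s t - m' s t) + m s b) := by
          rw [add_comm s a, hmf a ha, map_add]; abel
        rw [this]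
        exact Submodule.add_mem_sup (hS s hs t ht) (A.add_mem (d1' _ _) (hAid s b hb).1)
      have c1 := chain_of_super (transfer_super le_sup_right hAid' d1 (inf1 _)
        (hproper _ hsub hSA))
      have c2 := chain_inf (m₂ := m') (T := S) (B := S) (by
        intro J hJ
        refine ⟨inf_le_right, ?_⟩
        intro x hx y hy
        obtain ⟨p, q⟩ := hJ.2 x (Submodule.mem_sup_left hx) y hy.1
        exact ⟨⟨p, hS x hx y hy.2⟩, ⟨q, hS y hy.2 x hx⟩⟩) c1
      rw [bot_inf_eq, inf_eq_right.mpr le_sup_left] at c2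
      exact super_of_chain c2
end

section
/- Let M be a finite-dimensional Leibniz algebra over a field F and let S be a subalgebra of M. Then S is triangulable on M if and only if S² = S·S is contained in nil(S), the largest ideal of S that is nil on M. -/
/-!
Basic theory of (left) Leibniz algebras, formalized over an arbitrary field `F`.
A Leibniz algebra structure on an `F`-vector space `L` is given by a bilinear
multiplication `m : L →ₗ[F] L →ₗ[F] L` satisfying the left Leibniz identity.
-/

open Submodule Module

/-- A common eigenvector for a family `f` on `S`, killed by `N`, when `[S,S] ⊆ N` and long
products from `N` vanish. -/
lemma tri_exists_eigenvector {K V ι : Type*} [Field K] [IsAlgClosed K] [AddCommGroup V]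
    [Module K V] [FiniteDimensional K V] [Nontrivial V]
    (f : ι → Module.End K V) (op : ι → ι → ι) (S N : Set ι) (hNS : N ⊆ S)
    (hop : ∀ x ∈ S, ∀ y ∈ S, op x y ∈ N)
    (hf : ∀ x ∈ S, ∀ y ∈ S, f (op x y) = f x * f y - f y * f x)
    (k : ℕ) (hk : ∀ l : List ι, (∀ x ∈ l, x ∈ N) → l.length = k → (l.map f).prod = 0) :
    ∃ v : V, v ≠ 0 ∧ (∀ x ∈ S, ∃ c : K, f x v = c • v) := by
  classical
  -- the common kernel of `N`
  let W : Submodule K V := ⨅ x ∈ N, LinearMap.ker (f x)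
  have memW : ∀ v, v ∈ W ↔ ∀ x ∈ N, f x v = 0 := by
    intro v; simp [W, Submodule.mem_iInf]
  have hcomm : ∀ x ∈ S, ∀ y ∈ S, ∀ v ∈ W, f x (f y v) = f y (f x v) := by
    intro x hx y hy v hv
    have h1 := (memW v).1 hv _ (hop x hx y hy)
    rw [hf x hx y hy] at h1
    simpa [sub_eq_zero] using h1
  have hWinv : ∀ x ∈ S, ∀ v ∈ W, f x v ∈ W := by
    intro x hx v hv
    rw [memW]
    intro n hn
    rw [hcomm n (hNS hn) x hx v hv, (memW v).1 hv n hn, map_zero]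
  have hW : W ≠ ⊥ := by
    have hex : ∃ k, ∀ l : List ι, (∀ x ∈ l, x ∈ N) → l.length = k → (l.map f).prod = 0 := ⟨k, hk⟩
    obtain ⟨q, hq⟩ : ∃ q, q = Nat.find hex := ⟨_, rfl⟩
    have hq1 := Nat.find_spec hex
    rw [← hq] at hq1
    cases q with
    | zero =>
      have := hq1 [] (by simp) rfl
      obtain ⟨v, hv⟩ := exists_ne (0 : V)
      exact absurd (by simpa using congrArg (fun g : Module.End K V => g v) this) hv
    | succ q =>
      have h2 := Nat.find_min hex (m := q) (by omega)
      push Not at h2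
      obtain ⟨l, hl, hlen, hprod⟩ := h2
      obtain ⟨v, hv⟩ : ∃ v, (l.map f).prod v ≠ 0 := by
        by_contra! h
        exact hprod (LinearMap.ext h)
      intro hbot
      apply hv
      rw [← Submodule.mem_bot K, ← hbot, memW]
      intro x hx
      have := hq1 (x :: l) (by simpa [hx] using hl) (by simp [hlen])
      simpa using congrArg (fun g : Module.End K V => g v) this
  obtain ⟨U, ⟨hUbot, hUW, hUinv⟩, hmin⟩ := exists_minimal_of_wellFoundedLT
    (fun U : Submodule K V => U ≠ ⊥ ∧ U ≤ W ∧ ∀ x ∈ S, ∀ v ∈ U, f x v ∈ U)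
    ⟨W, hW, le_rfl, hWinv⟩
  obtain ⟨v, hvU, hv0⟩ := U.exists_mem_ne_zero_of_ne_bot hUbot
  refine ⟨v, hv0, fun x hx => ?_⟩
  have : Nontrivial U := Submodule.nontrivial_iff_ne_bot.2 hUbot
  obtain ⟨c, hc⟩ := Module.End.exists_eigenvalue ((f x).restrict (hUinv x hx))
  obtain ⟨u, hu⟩ := hc.exists_hasEigenvector
  have hu1 : f x u = c • (u : V) := by
    simpa using congrArg Subtype.val hu.apply_eq_smul
  refine ⟨c, ?_⟩
  let E : Submodule K V := U ⊓ Module.End.eigenspace (f x) c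
  have hE : U ≤ E := by
    apply hmin _ inf_le_left
    refine ⟨?_, inf_le_left.trans hUW, ?_⟩
    · rw [Submodule.ne_bot_iff]
      exact ⟨u, ⟨u.2, Module.End.mem_eigenspace_iff.2 hu1⟩, fun h => hu.2 (Subtype.ext h)⟩
    · rintro y hy w ⟨hw1, hw2⟩
      refine ⟨hUinv y hy w hw1, ?_⟩
      have hw2 := Module.End.mem_eigenspace_iff.1 hw2
      apply Module.End.mem_eigenspace_iff.2
      rw [hcomm x hx y hy w (hUW hw1), hw2, map_smul]
  exact Module.End.mem_eigenspace_iff.1 (hE hvU).2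

/-- Simultaneous triangulation. -/
lemma tri_exists_basis {K ι : Type*} [Field K] [IsAlgClosed K]
    (op : ι → ι → ι) (S N : Set ι) (hNS : N ⊆ S)
    (hop : ∀ x ∈ S, ∀ y ∈ S, op x y ∈ N) (k d : ℕ) :
    ∀ {V : Type*} [AddCommGroup V] [Module K V] [FiniteDimensional K V]
    (f : ι → Module.End K V)
    (_ : ∀ x ∈ S, ∀ y ∈ S, f (op x y) = f x * f y - f y * f x)
    (_ : ∀ l : List ι, (∀ x ∈ l, x ∈ N) → l.length = k → (l.map f).prod = 0)
    (_ : Module.finrank K V = d),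
    ∃ (n : ℕ) (b : Basis (Fin n) K V), ∀ x ∈ S, ∀ i j : Fin n, j < i →
      b.repr (f x (b j)) i = 0 := by
  induction d with
  | zero =>
    intro V _ _ _ f hf hk hd
    exact ⟨0, (Module.finBasisOfFinrankEq K V hd), fun x _ i => i.elim0⟩
  | succ d ih =>
    intro V _ _ _ f hf hk hd
    have : Nontrivial V := Module.nontrivial_of_finrank_pos (R := K) (by omega)
    obtain ⟨v, hv0, hv⟩ := tri_exists_eigenvector f op S N hNS hop hf k hk
    let W : Submodule K V := K ∙ v
    have hWS : ∀ x ∈ S, W ≤ W.comap (f x) := by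
      intro x hx
      rw [Submodule.span_singleton_le_iff_mem]
      obtain ⟨c, hc⟩ := hv x hx
      exact Submodule.mem_comap.2 (hc ▸ W.smul_mem c (Submodule.mem_span_singleton_self v))
    classical
    let g : ι → Module.End K (V ⧸ W) := fun x =>
      if hx : x ∈ S then W.mapQ W (f x) (hWS x hx) else 0
    have hg : ∀ x ∈ S, ∀ u, g x (W.mkQ u) = W.mkQ (f x u) := by
      intro x hx u
      simp [g, hx]
    have hd' : Module.finrank K (V ⧸ W) = d := by
      have h1 := W.finrank_quotient_add_finrank
      have h2 : Module.finrank K W = 1 := finrank_span_singleton hv0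
      omega
    have hgl : ∀ l : List ι, (∀ x ∈ l, x ∈ S) → ∀ u,
        (l.map g).prod (W.mkQ u) = W.mkQ ((l.map f).prod u) := by
      intro l hl
      induction l with
      | nil => intro u; simp
      | cons a l ihl =>
        intro u
        simp only [List.map_cons, List.prod_cons, Module.End.mul_apply]
        rw [ihl (fun x hx => hl x (List.mem_cons_of_mem _ hx)), hg a (hl a (by simp))]
    obtain ⟨n, bQ, hbQ⟩ := ih g
      (by
        intro x hx y hy
        apply LinearMap.ext
        intro q
        obtain ⟨u, rfl⟩ := W.mkQ_surjective q
        rw [hg _ (hNS (hop x hx y hy)), hf x hx y hy]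
        simp only [LinearMap.sub_apply, Module.End.mul_apply, map_sub, hg x hx, hg y hy])
      (by
        intro l hl hlen
        apply LinearMap.ext
        intro q
        obtain ⟨u, rfl⟩ := W.mkQ_surjective q
        rw [hgl l (fun x hx => hNS (hl x hx)), hk l hl hlen]
        simp) hd'
    let bW : Basis (Fin 1) K W :=
      Module.finBasisOfFinrankEq K W (finrank_span_singleton hv0)
    refine ⟨1 + n, (bW.sumQuot bQ).reindex finSumFinEquiv, fun x hx i j hij => ?_⟩
    obtain ⟨i, rfl⟩ := finSumFinEquiv.surjective i
    obtain ⟨j, rfl⟩ := finSumFinEquiv.surjective j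
    rw [Basis.repr_reindex_apply, Basis.reindex_apply]
    simp only [Equiv.symm_apply_apply]
    rcases i with i | i
    · exfalso
      rcases j with j | j
      · have := Subsingleton.elim i j
        subst this
        exact lt_irrefl _ hij
      · rw [Fin.lt_def] at hij
        simp at hij
    · rcases j with j | j
      · rw [Basis.sumQuot_inl]
        exact Basis.sumQuot_repr_inr_of_mem bW bQ (f x (bW j)) (hWS x hx (bW j).2) i
      · rw [Basis.sumQuot_repr_inr, ← hg x hx, Submodule.mkQ_apply, Basis.sumQuot_inr]
        apply hbQ x hx
        rw [Fin.lt_def] at hij ⊢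
        simpa using hij

attribute [local instance] LieRing.ofAssociativeRing

/-- Engel: a subspace closed under products and nil acts nilpotently. -/
lemma tri_engel {F : Type*} [Field F] {M : Type*} [AddCommGroup M] [Module F M]
    [FiniteDimensional F M]
    (m : M →ₗ[F] M →ₗ[F] M) (hm : IsLeibniz m)
    (N : Submodule F M) (hN : IsSubalg m N) (hnil : IsNilOn m N) :
    ∃ k, ∀ l : List M, (∀ x ∈ l, x ∈ N) → l.length = k → (l.map m).prod = 0 := by
  let g : LieSubalgebra F (Module.End F M) :=
    { N.map m with
      lie_mem' := by
        rintro _ _ ⟨x, hx, rfl⟩ ⟨y, hy, rfl⟩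
        refine ⟨m x y, hN x hx y hy, ?_⟩
        apply LinearMap.ext
        intro z
        rw [Ring.lie_def]
        simp only [LinearMap.sub_apply, Module.End.mul_apply]
        rw [hm x y z]; abel }
  have hg : ∀ x ∈ N, m x ∈ g := fun x hx => ⟨x, hx, rfl⟩
  have hnilp : LieModule.IsNilpotent g M := by
    rw [LieModule.isNilpotent_iff_forall' (R := F)]
    rintro ⟨_, x, hx, rfl⟩
    exact hnil x hx
  obtain ⟨k, hk⟩ := (LieModule.isNilpotent_iff F g M).1 hnilp
  have key : ∀ l : List M, (∀ x ∈ l, x ∈ N) → ∀ v,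
      (l.map m).prod v ∈ LieModule.lowerCentralSeries F g M l.length := by
    intro l hl
    induction l with
    | nil => intro v; simp
    | cons a l ih =>
      intro v
      simp only [List.map_cons, List.prod_cons, Module.End.mul_apply, List.length_cons]
      rw [LieModule.lowerCentralSeries_succ]
      exact LieSubmodule.lie_mem_lie (x := (⟨m a, hg a (hl a (by simp))⟩ : g))
        (LieSubmodule.mem_top _)
        (ih (fun x hx => hl x (List.mem_cons_of_mem _ hx)) v)
  refine ⟨k, fun l hl hlen => LinearMap.ext fun v => ?_⟩
  have := key l hl v
  rw [hlen, hk] at this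
  simpa using this

/-- Strictly upper triangular matrices are nilpotent. -/
lemma tri_strict_nilpotent {K : Type*} [Field K] {n : ℕ} (A : Matrix (Fin n) (Fin n) K)
    (h : ∀ i j, j ≤ i → A i j = 0) : IsNilpotent A := by
  refine ⟨n, ?_⟩
  have h1 := Matrix.charpoly_of_isUpperTriangular A (fun i j hij => h i j (le_of_lt hij))
  have h2 := A.aeval_self_charpoly
  rw [h1] at h2
  simpa [h _ _ le_rfl] using h2

/-- Let `M` be a finite-dimensional Leibniz algebra over `F` and `S` a
subalgebra of `M`. Then `S` is triangulable on `M` if and only if `S² = S·S` is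
contained in `nil(S)`, the largest ideal of `S` that is nil on `M` (given here via the
hypothesis that `N` is the greatest element of the set of ideals of `S` nil on `M`). -/
theorem triangulable_iff_square_le_nil
    {F : Type*} [Field F] {M : Type*} [AddCommGroup M] [Module F M]
    [FiniteDimensional F M]
    (m : M →ₗ[F] M →ₗ[F] M) (hm : IsLeibniz m)
    (S : Submodule F M) (hS : IsSubalg m S)
    (N : Submodule F M)
    (hN : IsGreatest {I : Submodule F M | IsIdealOf m S I ∧ IsNilOn m I} N) :
    IsTriangulableOn m S ↔ mprod m S S ≤ N := by
  classical
  have hbr : ∀ x y, m (m x y) = m x * m y - m y * m x := by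
    intro x y
    apply LinearMap.ext
    intro z
    simp only [LinearMap.sub_apply, Module.End.mul_apply]
    rw [hm x y z]; abel
  let Φ := Module.End.baseChangeHom F (AlgebraicClosure F) M
  constructor
  · rintro ⟨n, b, hb⟩
    apply hN.2
    let T : Module.End F M → Matrix (Fin n) (Fin n) (AlgebraicClosure F) :=
      fun g => LinearMap.toMatrix b b (Φ g)
    have hSS : mprod m S S ≤ S := Submodule.map₂_le.2 fun x hx y hy => hS x hx y hy
    refine ⟨⟨hSS, fun x hx y hy => ⟨Submodule.apply_mem_map₂ _ hx (hSS hy),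
      Submodule.apply_mem_map₂ _ (hSS hy) hx⟩⟩, ?_⟩
    let P : Submodule F M :=
      { carrier := {x | ∀ i j, j ≤ i → T (m x) i j = 0}
        zero_mem' := by intro i j _; simp [T]
        add_mem' := by
          intro x y hx hy i j hij
          have h1 := hx i j hij
          have h2 := hy i j hij
          simp only [T] at h1 h2 ⊢
          rw [map_add, map_add, map_add, Matrix.add_apply, h1, h2, add_zero]
        smul_mem' := by
          intro c x hx i j hij
          have h1 := hx i j hij
          simp only [T] at h1 ⊢
          rw [map_smul, map_smul, ← algebraMap_smul (AlgebraicClosure F) c (Φ (m x)), map_smul,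
            Matrix.smul_apply, h1, smul_zero] }
    have hP : mprod m S S ≤ P := by
      refine Submodule.map₂_le.2 fun x hx y hy i j hij => ?_
      have hx' : ∀ i j, j < i → T (m x) i j = 0 := hb x hx
      have hy' : ∀ i j, j < i → T (m y) i j = 0 := hb y hy
      have hmul : T (m (m x y)) = T (m x) * T (m y) - T (m y) * T (m x) := by
        simp only [T]
        rw [hbr, map_sub, map_mul, map_mul, map_sub, LinearMap.toMatrix_mul,
          LinearMap.toMatrix_mul]
      rw [hmul, Matrix.sub_apply, Matrix.mul_apply, Matrix.mul_apply, ← Finset.sum_sub_distrib]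
      apply Finset.sum_eq_zero
      intro k _
      rcases lt_trichotomy k i with h | h | h
      · rw [hx' i k h, hy' i k h]; ring
      · subst h
        rcases hij.lt_or_eq with h | h
        · rw [hy' k j h, hx' k j h]; ring
        · subst h; ring
      · rw [hy' k j (hij.trans_lt h), hx' k j (hij.trans_lt h)]; ring
    intro x hx
    obtain ⟨k, hk⟩ := tri_strict_nilpotent _ (hP hx)
    refine ⟨k, ?_⟩
    have hinj : Function.Injective Φ :=
      LinearMap.baseChangeHom_injective F M (AlgebraicClosure F)
    apply hinj
    apply (LinearMap.toMatrix b b).injective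
    rw [map_pow, map_zero, map_zero, ← hk, LinearMap.toMatrix_pow]
  · intro h
    obtain ⟨⟨hNS, hNid⟩, hNnil⟩ := hN.1
    obtain ⟨k, hk⟩ := tri_engel m hm N (fun x hx y hy => (hNid x (hNS hx) y hy).1) hNnil
    obtain ⟨n, b, hb⟩ := tri_exists_basis (K := AlgebraicClosure F) (fun x y => m x y)
      (S : Set M) (N : Set M) hNS
      (fun x hx y hy => h (Submodule.apply_mem_map₂ _ hx hy)) k _
      (fun x => Φ (m x)) (fun x _ y _ => by rw [hbr, map_sub, map_mul, map_mul])
      (fun l hl hlen => by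
        have := congrArg Φ (hk l hl hlen)
        rw [map_list_prod, map_zero, List.map_map] at this
        exact this) rfl
    refine ⟨n, b, fun x hx i j hij => ?_⟩
    rw [LinearMap.toMatrix_apply]
    exact hb x hx i j hij
end

section
/- Let M be a finite-dimensional Leibniz algebra over a field F and let L be an ideal of M. Then L is triangulable on M if and only if L² = L·L is nilpotent. -/
/-!
Basic theory of (left) Leibniz algebras, formalized over an arbitrary field `F`.
A Leibniz algebra structure on an `F`-vector space `L` is given by a bilinear
multiplication `m : L →ₗ[F] L →ₗ[F] L` satisfying the left Leibniz identity.
-/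

open Submodule Module

section Helpers

variable {K V : Type*} [Field K] [AddCommGroup V] [Module K V]

/-- An operator preserving `Q < P` has an eigenvector on `P` modulo `Q`. -/
theorem exists_eigen_mod [IsAlgClosed K] [FiniteDimensional K V] (s : End K V)
    (Q P : Submodule K V) (hQP : Q < P) (hQ : ∀ v ∈ Q, s v ∈ Q) (hP : ∀ v ∈ P, s v ∈ P) :
    ∃ a : K, ∃ v ∈ P, v ∉ Q ∧ s v - a • v ∈ Q := by
  let Q' : Submodule K P := Q.submoduleOf P
  let sP : End K P := s.restrict hP
  have hQ' : Q' ≤ Q'.comap sP := fun v hv => hQ _ hv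
  have hne : Q' ≠ ⊤ := by
    intro h
    apply hQP.not_ge
    intro v hv
    have : (⟨v, hv⟩ : P) ∈ Q' := h ▸ Submodule.mem_top
    exact this
  have : Nontrivial (P ⧸ Q') := Submodule.Quotient.nontrivial_iff.2 hne
  obtain ⟨a, ha⟩ := End.exists_eigenvalue (Q'.mapQ Q' sP hQ')
  obtain ⟨w, hw⟩ := ha.exists_hasEigenvector
  obtain ⟨p, rfl⟩ := Submodule.Quotient.mk_surjective Q' w
  refine ⟨a, p, p.2, ?_, ?_⟩
  · intro hp
    exact hw.2 ((Submodule.Quotient.mk_eq_zero Q').2 hp)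
  · have h := hw.apply_eq_smul
    rw [Submodule.mapQ_apply, ← Submodule.Quotient.mk_smul, Submodule.Quotient.eq] at h
    exact h

/-- The relative common eigenvector lemma. -/
theorem exists_common_eigen_mod [IsAlgClosed K] [FiniteDimensional K V] (S T : Set (End K V))
    (hTS : T ⊆ S) (hSS : ∀ s ∈ S, ∀ s' ∈ S, s * s' - s' * s ∈ T)
    (D : ℕ → Submodule K V) (n : ℕ) (hD0 : D 0 = ⊤) (hDn : D n = ⊥)
    (hTD : ∀ t ∈ T, ∀ k, ∀ v ∈ D k, t v ∈ D (k + 1))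
    (Q : Submodule K V) (hQ : ∀ s ∈ S, ∀ v ∈ Q, s v ∈ Q) (hQt : Q ≠ ⊤) :
    ∃ w, w ∉ Q ∧ ∀ s ∈ S, ∃ a : K, s w - a • w ∈ Q := by
  classical
  let X : Set (Submodule K V) := {P | Q < P ∧ ∀ s ∈ S, ∀ v ∈ P, s v ∈ P}
  have hX : X.Nonempty := ⟨⊤, lt_top_iff_ne_top.2 hQt, fun _ _ _ _ => Submodule.mem_top⟩
  obtain ⟨P, ⟨hQP, hP⟩, hmin⟩ := WellFounded.has_min (wellFounded_lt (α := Submodule K V)) X hX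
  have key : ∀ E : Submodule K V, Q ≤ E → E ≤ P → (∃ v ∈ E, v ∉ Q) →
      (∀ s ∈ S, ∀ v ∈ E, s v ∈ E) → P ≤ E := by
    intro E hQE hEP hv hE
    have hlt : Q < E := lt_of_le_not_ge hQE fun h => by
      obtain ⟨v, h1, h2⟩ := hv
      exact h2 (h h1)
    by_contra hc
    exact hmin E ⟨hlt, hE⟩ (lt_of_le_not_ge hEP hc)
  obtain ⟨w, hwP, hwQ⟩ := SetLike.exists_of_lt hQP
  -- `T` maps `P` into `Q`
  have hTP : ∀ t ∈ T, ∀ v ∈ P, t v ∈ Q := by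
    let R : Submodule K V :=
      { carrier := {v | v ∈ P ∧ ∀ t ∈ T, t v ∈ Q}
        add_mem' := fun {a b} ha hb => ⟨P.add_mem ha.1 hb.1, fun t ht => by
          rw [map_add]; exact Q.add_mem (ha.2 t ht) (hb.2 t ht)⟩
        zero_mem' := ⟨P.zero_mem, fun t _ => by rw [map_zero]; exact Q.zero_mem⟩
        smul_mem' := fun c a ha => ⟨P.smul_mem c ha.1, fun t ht => by
          rw [map_smul]; exact Q.smul_mem c (ha.2 t ht)⟩ }
    have hR : P ≤ R := by
      apply key R
      · exact fun v hv => ⟨hQP.le hv, fun t ht => hQ t (hTS ht) v hv⟩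
      · exact fun v hv => hv.1
      · by_contra hc
        have hall : ∀ k, ∃ v ∈ P, v ∈ D k ∧ v ∉ Q := by
          intro k
          induction k with
          | zero => exact ⟨w, hwP, hD0 ▸ Submodule.mem_top, hwQ⟩
          | succ k ih =>
            obtain ⟨v, hvP, hvD, hvQ⟩ := ih
            by_contra hno
            apply hc
            refine ⟨v, ⟨hvP, fun t ht => ?_⟩, hvQ⟩
            by_contra htv
            exact hno ⟨t v, hP t (hTS ht) v hvP, hTD t ht k v hvD, htv⟩
        obtain ⟨v, _, hvD, hvQ⟩ := hall n
        rw [hDn, Submodule.mem_bot] at hvD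
        exact hvQ (hvD ▸ Q.zero_mem)
      · intro s hs v hv
        refine ⟨hP s hs v hv.1, fun t ht => ?_⟩
        have h1 : t (s v) = (t * s - s * t) v + s (t v) := by simp
        rw [h1]
        refine Q.add_mem (hv.2 _ (hSS t (hTS ht) s hs)) (hQ s hs _ (hv.2 t ht))
    exact fun t ht v hv => (hR hv).2 t ht
  refine ⟨w, hwQ, fun s hs => ?_⟩
  obtain ⟨a, v, hvP, hvQ, hv⟩ := exists_eigen_mod s Q P hQP (hQ s hs) (hP s hs)
  refine ⟨a, ?_⟩
  let E : Submodule K V := P ⊓ Q.comap (s - a • LinearMap.id)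
  have hE : P ≤ E := by
    apply key E
    · refine fun u hu => ⟨hQP.le hu, ?_⟩
      exact Q.sub_mem (hQ s hs u hu) (Q.smul_mem a hu)
    · exact inf_le_left
    · exact ⟨v, ⟨hvP, hv⟩, hvQ⟩
    · intro s' hs' u hu
      refine ⟨hP s' hs' u hu.1, ?_⟩
      have h2 : s u - a • u ∈ Q := hu.2
      have h1 : (s - a • LinearMap.id : End K V) (s' u) =
          (s * s' - s' * s) u + s' (s u - a • u) := by
        simp
      change (s - a • LinearMap.id : End K V) (s' u) ∈ Q
      rw [h1]
      exact Q.add_mem (hTP _ (hSS s hs s' hs') u hu.1) (hQ s' hs' _ h2)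
  exact (hE hwP).2

theorem exists_triang_family [IsAlgClosed K] [FiniteDimensional K V] (S T : Set (End K V))
    (hTS : T ⊆ S) (hSS : ∀ s ∈ S, ∀ s' ∈ S, s * s' - s' * s ∈ T)
    (D : ℕ → Submodule K V) (n : ℕ) (hD0 : D 0 = ⊤) (hDn : D n = ⊥)
    (hTD : ∀ t ∈ T, ∀ k, ∀ v ∈ D k, t v ∈ D (k + 1)) (d : ℕ) (hd : d ≤ finrank K V) :
    ∃ v : Fin d → V, LinearIndependent K v ∧
      ∀ s ∈ S, ∀ j, s (v j) ∈ span K (v '' Set.Iic j) := by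
  induction d with
  | zero => exact ⟨Fin.elim0, linearIndependent_empty_type, fun _ _ j => j.elim0⟩
  | succ d ih =>
    obtain ⟨v, hli, hv⟩ := ih (by omega)
    let Q := span K (Set.range v)
    have hQ : ∀ s ∈ S, ∀ u ∈ Q, s u ∈ Q := by
      intro s hs
      have : Q ≤ Q.comap s := by
        refine span_le.2 ?_
        rintro _ ⟨j, rfl⟩
        exact span_mono (Set.image_subset_range _ _) (hv s hs j)
      exact this
    have hQt : Q ≠ ⊤ := by
      intro h
      have h1 : finrank K Q = d := by
        simpa using finrank_span_eq_card hli
      rw [h, finrank_top] at h1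
      omega
    obtain ⟨w, hw, hws⟩ := exists_common_eigen_mod S T hTS hSS D n hD0 hDn hTD Q hQ hQt
    refine ⟨Fin.snoc v w, linearIndependent_finSnoc.2 ⟨hli, hw⟩, fun s hs j => ?_⟩
    refine Fin.lastCases ?_ (fun j => ?_) j
    · obtain ⟨a, ha⟩ := hws s hs
      rw [Fin.snoc_last]
      have h1 : s w = (s w - a • w) + a • w := by abel
      rw [h1]
      refine add_mem ?_ (smul_mem _ _ ?_)
      · refine span_mono ?_ ha
        rintro _ ⟨i, rfl⟩
        exact ⟨i.castSucc, Fin.le_last _, by simp⟩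
      · exact subset_span ⟨Fin.last d, Set.mem_Iic.2 le_rfl, by simp⟩
    · rw [Fin.snoc_castSucc]
      refine span_mono ?_ (hv s hs j)
      rintro _ ⟨i, hi, rfl⟩
      exact ⟨i.castSucc, Fin.castSucc_le_castSucc_iff.2 hi, by simp⟩

theorem exists_triang_basis [IsAlgClosed K] [FiniteDimensional K V] (S T : Set (End K V))
    (hTS : T ⊆ S) (hSS : ∀ s ∈ S, ∀ s' ∈ S, s * s' - s' * s ∈ T)
    (D : ℕ → Submodule K V) (n : ℕ) (hD0 : D 0 = ⊤) (hDn : D n = ⊥)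
    (hTD : ∀ t ∈ T, ∀ k, ∀ v ∈ D k, t v ∈ D (k + 1)) :
    ∃ b : Basis (Fin (finrank K V)) K V,
      ∀ s ∈ S, ∀ i j, j < i → LinearMap.toMatrix b b s i j = 0 := by
  obtain ⟨v, hli, hv⟩ := exists_triang_family S T hTS hSS D n hD0 hDn hTD _ le_rfl
  by_cases h0 : Nonempty (Fin (finrank K V))
  · let b := basisOfLinearIndependentOfCardEqFinrank hli (by simp)
    have hb : ⇑b = v := coe_basisOfLinearIndependentOfCardEqFinrank hli (by simp)
    refine ⟨b, fun s hs i j hij => ?_⟩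
    have h1 := hv s hs j
    rw [← hb, b.mem_span_image] at h1
    rw [LinearMap.toMatrix_apply]
    by_contra hc
    have h2 : i ≤ j := h1 (Finsupp.mem_support_iff.2 hc)
    exact absurd h2 (not_le.2 hij)
  · exact ⟨finBasis K V, fun s hs i => absurd ⟨i⟩ h0⟩

end Helpers

section LeibnizHelpers

open scoped TensorProduct

variable {F : Type*} [Field F] {M : Type*} [AddCommGroup M] [Module F M]

theorem baseChange_commutator (A : Type*) [CommRing A] [Algebra F A]
    (m : M →ₗ[F] M →ₗ[F] M) (hm : IsLeibniz m) (x y : M) :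
    (m x).baseChange A * (m y).baseChange A - (m y).baseChange A * (m x).baseChange A =
      (m (m x y)).baseChange A := by
  ext c
  have h : m (m x y) c = m x (m y c) - m y (m x c) := by
    rw [hm x y c]; abel
  simp [h, TensorProduct.tmul_sub]

theorem square_ideal (m : M →ₗ[F] M →ₗ[F] M) (hm : IsLeibniz m)
    (I : Submodule F M) (hI : IsIdeal m I) (z : M) (hz : z ∈ mprod m I I) (a : M) :
    m z a ∈ mprod m I I := by
  have : mprod m I I ≤ (mprod m I I).comap (m.flip a) := by
    rw [map₂_le]
    intro x hx y hy
    change m (m x y) a ∈ mprod m I I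
    have h : m (m x y) a = m x (m y a) - m y (m x a) := by
      rw [hm x y a]; abel
    rw [h]
    exact sub_mem (apply_mem_map₂ _ hx (hI a y hy).2) (apply_mem_map₂ _ hy (hI a x hx).2)
  exact this hz

theorem triang_of_nilp [FiniteDimensional F M]
    (m : M →ₗ[F] M →ₗ[F] M) (hm : IsLeibniz m)
    (I : Submodule F M) (hI : IsIdeal m I) (h : IsNilpotentSub m (mprod m I I)) :
    IsTriangulableOn m I := by
  obtain ⟨k, hk⟩ := h
  let A := AlgebraicClosure F
  let N := mprod m I I
  have hNI : N ≤ I := (map₂_le (p := I) (q := I)).2 fun x _ y hy => (hI x y hy).1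
  let C : ℕ → Submodule F M := fun i => match i with
    | 0 => ⊤
    | i + 1 => lcSeries m N i
  have hC : ∀ z ∈ N, ∀ i : ℕ, ∀ v ∈ C i, m z v ∈ C (i + 1) := by
    intro z hz i v hv
    cases i with
    | zero => exact square_ideal m hm I hI z hz v
    | succ i => exact apply_mem_map₂ _ hz hv
  obtain ⟨b, hb⟩ := exists_triang_basis
    (K := A) (V := TensorProduct F A M)
    ((fun x => (m x).baseChange A) '' (I : Set M)) ((fun x => (m x).baseChange A) '' (N : Set M))
    (Set.image_mono hNI)
    (by
      rintro _ ⟨x, hx, rfl⟩ _ ⟨y, hy, rfl⟩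
      exact ⟨m x y, apply_mem_map₂ _ hx hy, (baseChange_commutator A m hm x y).symm⟩)
    (fun i => (C i).baseChange A) (k + 1)
    (Submodule.baseChange_top ..) (by
      change (lcSeries m N k).baseChange A = ⊥
      rw [hk]; exact Submodule.baseChange_bot ..)
    (by
      rintro _ ⟨z, hz, rfl⟩ i
      have : (C i).baseChange A ≤ ((C (i + 1)).baseChange A).comap ((m z).baseChange A) := by
        rw [Submodule.baseChange_eq_span, span_le]
        rintro _ ⟨v, hv, rfl⟩
        exact Submodule.tmul_mem_baseChange_of_mem (1 : A) (hC z hz i v hv)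
      exact this)
  exact ⟨_, b, fun x hx i j hij => hb _ ⟨x, hx, rfl⟩ i j hij⟩

theorem nilp_of_triang
    (m : M →ₗ[F] M →ₗ[F] M) (hm : IsLeibniz m)
    (I : Submodule F M) (h : IsTriangulableOn m I) :
    IsNilpotentSub m (mprod m I I) := by
  obtain ⟨n, b, hb⟩ := h
  let N := mprod m I I
  let X : M → Matrix (Fin n) (Fin n) (AlgebraicClosure F) := fun x => LinearMap.toMatrix b b ((m x).baseChange (AlgebraicClosure F))
  have hmul : ∀ x ∈ I, ∀ y ∈ I, ∀ i j, j ≤ i → (X x * X y) i j = X x i i * X y i j := by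
    intro x hx y hy i j hij
    rw [Matrix.mul_apply]
    refine Finset.sum_eq_single i (fun l _ hl => ?_) (by simp)
    rcases lt_or_gt_of_ne hl with h | h
    · rw [show X x i l = 0 from hb x hx i l h, zero_mul]
    · rw [show X y l j = 0 from hb y hy l j (hij.trans_lt h), mul_zero]
  have hN : ∀ z ∈ N, ∀ i j, j ≤ i → X z i j = 0 := by
    intro z hz i j hij
    have hle : N ≤ LinearMap.ker ((LinearMap.proj (R := F) (φ := fun _ : Fin n => (AlgebraicClosure F)) j ∘ₗ
        LinearMap.proj (R := F) (φ := fun _ : Fin n => Fin n → (AlgebraicClosure F)) i) ∘ₗ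
        ((LinearMap.toMatrix b b).toLinearMap.restrictScalars F) ∘ₗ
        (LinearMap.baseChangeHom F (AlgebraicClosure F) M M) ∘ₗ m) := by
      refine map₂_le.2 fun x hx y hy => ?_
      rw [LinearMap.mem_ker]
      change X (m x y) i j = 0
      have h1 : X (m x y) = X x * X y - X y * X x := by
        change LinearMap.toMatrix b b ((m (m x y)).baseChange (AlgebraicClosure F)) = _
        rw [← baseChange_commutator (AlgebraicClosure F) m hm x y]
        refine (map_sub (LinearMap.toMatrix b b) _ _).trans ?_
        rw [LinearMap.toMatrix_mul, LinearMap.toMatrix_mul]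
      rw [h1, Matrix.sub_apply, hmul x hx y hy i j hij, hmul y hy x hx i j hij]
      rcases hij.lt_or_eq with h | rfl
      · rw [show X x i j = 0 from hb x hx i j h, show X y i j = 0 from hb y hy i j h]; simp
      · ring
    exact hle hz
  have hlc : ∀ k, ∀ w ∈ lcSeries m N k, ∀ i : Fin n, n ≤ i + k →
      b.repr ((1 : (AlgebraicClosure F)) ⊗ₜ[F] w) i = 0 := by
    intro k
    induction k with
    | zero => intro w _ i hi; have := i.2; omega
    | succ k ih =>
      intro w hw i hi
      have hle : mprod m N (lcSeries m N k) ≤ LinearMap.ker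
          (((b.coord i).restrictScalars F) ∘ₗ (TensorProduct.mk F (AlgebraicClosure F) M 1)) := by
        refine map₂_le.2 fun z hz u hu => ?_
        rw [LinearMap.mem_ker]
        change b.repr ((m z).baseChange (AlgebraicClosure F) ((1 : (AlgebraicClosure F)) ⊗ₜ[F] u)) i = 0
        have h1 := congrFun (LinearMap.toMatrix_mulVec_repr b b ((m z).baseChange (AlgebraicClosure F))
          ((1 : (AlgebraicClosure F)) ⊗ₜ[F] u)) i
        rw [← h1]
        simp only [Matrix.mulVec, dotProduct]
        refine Finset.sum_eq_zero fun j _ => ?_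
        by_cases hji : j ≤ i
        · exact mul_eq_zero_of_left (hN z hz i j hji) _
        · have : (i : ℕ) < j := not_le.1 hji
          exact mul_eq_zero_of_right _ (ih u hu j (by omega))
      exact hle hw
  refine ⟨n, (Submodule.eq_bot_iff _).2 fun w hw => ?_⟩
  have h0 : (1 : (AlgebraicClosure F)) ⊗ₜ[F] w = 0 := by
    apply b.repr.injective
    ext i
    rw [hlc n w hw i (by omega)]; simp
  apply Module.FaithfullyFlat.tensorProduct_mk_injective (A := F) (B := (AlgebraicClosure F)) M
  change (1 : (AlgebraicClosure F)) ⊗ₜ[F] w = (1 : (AlgebraicClosure F)) ⊗ₜ[F] 0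
  rw [h0, TensorProduct.tmul_zero]

end LeibnizHelpers

/-- Let `M` be a finite-dimensional Leibniz algebra over `F` and `I`
an ideal of `M`. Then `I` is triangulable on `M` if and only if `I² = I·I` is
nilpotent. -/
theorem ideal_triangulable_iff_square_nilpotent
    {F : Type*} [Field F] {M : Type*} [AddCommGroup M] [Module F M]
    [FiniteDimensional F M]
    (m : M →ₗ[F] M →ₗ[F] M) (hm : IsLeibniz m)
    (I : Submodule F M) (hI : IsIdeal m I) :
    IsTriangulableOn m I ↔ IsNilpotentSub m (mprod m I I) := by
  exact ⟨nilp_of_triang m hm I, triang_of_nilp m hm I hI⟩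
end

section
/- Let M be a finite-dimensional Leibniz algebra over a field F. Then M is triangulable on itself if and only if M is strongly solvable. -/
/-!
Basic theory of (left) Leibniz algebras, formalized over an arbitrary field `F`.
A Leibniz algebra structure on an `F`-vector space `L` is given by a bilinear
multiplication `m : L →ₗ[F] L →ₗ[F] L` satisfying the left Leibniz identity.
-/

open Submodule Module

section Helpers

open scoped TensorProduct

/-- Step: above any proper invariant subspace there is a vector spanning an invariant line. -/
lemma tri_step {K V X : Type*} [Field K] [IsAlgClosed K] [AddCommGroup V] [Module K V]
    [FiniteDimensional K V] (f : X → Module.End K V) (N : Set X) (br : X → X → X)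
    (hbr : ∀ x y v, f (br x y) v = f x (f y v) - f y (f x v)) (hN : ∀ x y, br x y ∈ N)
    (P : ℕ → Submodule K V) (hP0 : P 0 = ⊤) (k : ℕ) (hPk : P k = ⊥)
    (hP : ∀ i, ∀ z ∈ N, ∀ v ∈ P i, f z v ∈ P (i + 1))
    (U : Submodule K V) (hU : ∀ x, ∀ v ∈ U, f x v ∈ U) (hUt : U ≠ ⊤) :
    ∃ v, v ∉ U ∧ ∀ x, ∃ c : K, f x v - c • v ∈ U := by
  classical
  let S : Set (Submodule K V) := {W | U < W ∧ ∀ x, ∀ v ∈ W, f x v ∈ W}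
  have hS : S.Nonempty := ⟨⊤, lt_top_iff_ne_top.mpr hUt, fun _ _ _ => trivial⟩
  obtain ⟨W, ⟨hUW, hW⟩, hmin⟩ := WellFounded.has_min (wellFounded_lt (α := Submodule K V)) S hS
  have hmin' : ∀ W', U ≤ W' → W' ≤ W → (∀ x, ∀ v ∈ W', f x v ∈ W') → (∃ v ∈ W', v ∉ U) →
      W' = W := by
    intro W' h1 h2 h3 ⟨v, hv, hvU⟩
    by_contra hne
    exact hmin W' ⟨lt_of_le_of_ne h1 (fun h => hvU (h ▸ hv)), h3⟩ (lt_of_le_of_ne h2 hne)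
  obtain ⟨w, hwW, hwU⟩ := SetLike.exists_of_lt hUW
  -- elements of N send W into U
  have hNW : ∀ z ∈ N, ∀ v ∈ W, f z v ∈ U := by
    let W' : Submodule K V :=
      { carrier := {v | v ∈ W ∧ ∀ z ∈ N, f z v ∈ U}
        add_mem' := fun {a b} ha hb => ⟨W.add_mem ha.1 hb.1, fun z hz => by
          rw [map_add]; exact U.add_mem (ha.2 z hz) (hb.2 z hz)⟩
        zero_mem' := ⟨W.zero_mem, fun z _ => by rw [map_zero]; exact U.zero_mem⟩
        smul_mem' := fun c a ha => ⟨W.smul_mem c ha.1, fun z hz => by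
          rw [map_smul]; exact U.smul_mem c (ha.2 z hz)⟩ }
    have : W' = W := by
      refine hmin' W' (fun v hv => ⟨hUW.le hv, fun z _ => hU z v hv⟩) (fun v hv => hv.1) ?_ ?_
      · intro x v hv
        refine ⟨hW x v hv.1, fun z hz => ?_⟩
        have h1 := hbr x z v
        have h2 : f z (f x v) = f x (f z v) - f (br x z) v := by rw [h1]; abel
        rw [h2]
        exact U.sub_mem (hU x _ (hv.2 z hz)) (hv.2 _ (hN x z))
      · have hex : ∃ i, ¬ ∃ v ∈ P i ⊓ W, v ∉ U := by
          refine ⟨k, ?_⟩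
          rintro ⟨v, hv, hvU⟩
          rw [hPk, bot_inf_eq, Submodule.mem_bot] at hv
          exact hvU (hv ▸ U.zero_mem)
        have h0 : Nat.find hex ≠ 0 := by
          intro h
          have := Nat.find_spec hex
          rw [h] at this
          exact this ⟨w, by rw [hP0]; exact ⟨trivial, hwW⟩, hwU⟩
        obtain ⟨i, hi⟩ := Nat.exists_eq_succ_of_ne_zero h0
        have h1 := Nat.find_spec hex
        rw [hi] at h1
        have h2 := Nat.find_min hex (m := i) (by omega)
        push Not at h1 h2
        obtain ⟨v, hv, hvU⟩ := h2
        exact ⟨v, ⟨hv.2, fun z hz => h1 _ ⟨hP i z hz v hv.1, hW z v hv.2⟩⟩, hvU⟩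
    intro z hz v hv
    rw [← this] at hv
    exact hv.2 z hz
  refine ⟨w, hwU, fun x => ?_⟩
  -- the induced endomorphism on W / U
  let g : Module.End K W := (f x).restrict (fun v hv => hW x v hv)
  let U' : Submodule K W := U.comap W.subtype
  have hg : U' ≤ U'.comap g := fun v hv => hU x v.1 hv
  let q : Module.End K (W ⧸ U') := U'.mapQ U' g hg
  have hnt : Nontrivial (W ⧸ U') := by
    refine ⟨U'.mkQ ⟨w, hwW⟩, 0, fun h => hwU ?_⟩
    have : (⟨w, hwW⟩ : W) ∈ U' := (Submodule.Quotient.mk_eq_zero U').mp h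
    exact this
  obtain ⟨c, hc⟩ := Module.End.exists_eigenvalue q
  obtain ⟨e, he⟩ := hc.exists_hasEigenvector
  obtain ⟨u, rfl⟩ := U'.mkQ_surjective e
  have hu : f x u.1 - c • u.1 ∈ U := by
    have h1 := he.apply_eq_smul
    have h2 : U'.mkQ (g u - c • u) = 0 := by
      rw [map_sub, map_smul, ← h1]; simp [q]
    exact (Submodule.Quotient.mk_eq_zero U').mp h2
  have huU : u.1 ∉ U := fun h => he.2 ((Submodule.Quotient.mk_eq_zero U').mpr h)
  let W' : Submodule K V := W ⊓ U.comap (f x - c • LinearMap.id)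
  have hW'mem : ∀ v, v ∈ W' ↔ v ∈ W ∧ f x v - c • v ∈ U := fun v => by
    simp [W']
  have : W' = W := by
    refine hmin' W' ?_ inf_le_left ?_ ⟨u.1, (hW'mem _).2 ⟨u.2, hu⟩, huU⟩
    · intro v hv
      exact (hW'mem v).2 ⟨hUW.le hv, U.sub_mem (hU x v hv) (U.smul_mem c hv)⟩
    · intro y v hv
      obtain ⟨hv1, hv2⟩ := (hW'mem v).1 hv
      refine (hW'mem _).2 ⟨hW y v hv1, ?_⟩
      have h1 : f x (f y v) - c • f y v = f (br x y) v + f y (f x v - c • v) := by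
        rw [hbr, map_sub, map_smul]; abel
      rw [h1]
      exact U.add_mem (hNW _ (hN x y) v hv1) (hU y _ hv2)
  rw [← this] at hwW
  exact ⟨c, ((hW'mem w).1 hwW).2⟩

lemma tri_flag {K V X : Type*} [Field K] [AddCommGroup V] [Module K V]
    [FiniteDimensional K V] (f : X → Module.End K V)
    (hstep : ∀ U : Submodule K V, (∀ x, ∀ v ∈ U, f x v ∈ U) → U ≠ ⊤ →
      ∃ v, v ∉ U ∧ ∀ x, ∃ c : K, f x v - c • v ∈ U) (k : ℕ) (hk : k ≤ Module.finrank K V) :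
    ∃ v : Fin k → V, LinearIndependent K v ∧
      ∀ x j, f x (v j) ∈ Submodule.span K (v '' Set.Iic j) := by
  induction k with
  | zero => exact ⟨Fin.elim0, linearIndependent_empty_type, fun _ j => j.elim0⟩
  | succ k ih =>
    obtain ⟨v, hv, hf⟩ := ih (by omega)
    let U := Submodule.span K (Set.range v)
    have hU : ∀ x, ∀ u ∈ U, f x u ∈ U := by
      intro x
      change U ≤ U.comap (f x)
      refine Submodule.span_le.mpr ?_
      rintro _ ⟨j, rfl⟩
      exact Submodule.span_mono (Set.image_subset_range _ _) (hf x j)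
    have hUt : U ≠ ⊤ := by
      intro h
      have h1 : Module.finrank K U = k := by
        simpa using finrank_span_eq_card hv
      rw [h, finrank_top] at h1
      omega
    obtain ⟨w, hw, hc⟩ := hstep U hU hUt
    refine ⟨Fin.snoc v w, linearIndependent_finSnoc.mpr ⟨hv, hw⟩, fun x j => ?_⟩
    induction j using Fin.lastCases with
    | last =>
      obtain ⟨c, hc⟩ := hc x
      have hle : U ≤ Submodule.span K ((Fin.snoc v w : Fin (k+1) → V) '' Set.Iic (Fin.last k)) := by
        refine Submodule.span_mono ?_
        rintro _ ⟨j, rfl⟩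
        exact ⟨j.castSucc, Fin.le_last _, by simp⟩
      have hwm : w ∈ Submodule.span K
          ((Fin.snoc v w : Fin (k+1) → V) '' Set.Iic (Fin.last k)) :=
        Submodule.subset_span ⟨Fin.last k, Set.mem_Iic.mpr le_rfl, by simp⟩
      have := Submodule.add_mem _ (hle hc) (Submodule.smul_mem _ c hwm)
      simpa using this
    | cast j =>
      simp only [Fin.snoc_castSucc]
      refine Submodule.span_mono ?_ (hf x j)
      rintro _ ⟨i, hi, rfl⟩
      exact ⟨i.castSucc, Fin.castSucc_le_castSucc_iff.mpr hi, by simp⟩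

lemma strong_of_tri {F : Type*} [Field F] {M : Type*} [AddCommGroup M] [Module F M]
    (m : M →ₗ[F] M →ₗ[F] M) (hm : IsLeibniz m)
    (h : IsTriangulableOn m (⊤ : Submodule F M)) :
    IsStronglySolvable m (⊤ : Submodule F M) := by
  obtain ⟨n, b, hb⟩ := h
  set K := AlgebraicClosure F
  let E : M → Matrix (Fin n) (Fin n) K := fun x =>
    LinearMap.toMatrix b b (LinearMap.baseChange K (m x))
  have hE : ∀ x i j, j < i → E x i j = 0 := fun x i j hij => hb x trivial i j hij
  have hEadd : ∀ x y, E (x + y) = E x + E y := fun x y => by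
    simp [E, LinearMap.baseChange_add]
  have hEsmul : ∀ (c : F) x, E (c • x) = c • E x := fun c x => by
    ext i j
    simp only [E, map_smul, LinearMap.baseChange_smul, LinearMap.toMatrix_apply,
      LinearMap.smul_apply, Matrix.smul_apply]
    rw [← algebraMap_smul K c, ← algebraMap_smul K c, b.repr.map_smul, Finsupp.smul_apply]
  have hEbr : ∀ x y, E (m x y) = E x * E y - E y * E x := fun x y => by
    have h1 : m x * m y = m (m x y) + m y * m x := by
      ext c
      exact hm x y c
    rw [eq_sub_iff_add_eq]
    have h2 : ∀ x y, E x * E y = LinearMap.toMatrix b b ((m x * m y).baseChange K) := by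
      intro x y
      rw [LinearMap.baseChange_mul]
      exact (LinearMap.toMatrix_mul b _ _).symm
    rw [h2, h2, h1, LinearMap.baseChange_add]
    exact ((LinearMap.toMatrix b b).map_add _ _).symm
  let R : Submodule F M :=
    { carrier := {z | ∀ i j, j ≤ i → E z i j = 0}
      add_mem' := fun {x y} hx hy i j hij => by
        rw [hEadd, Matrix.add_apply, hx i j hij, hy i j hij, add_zero]
      zero_mem' := fun i j _ => by simp [E]
      smul_mem' := fun c x hx i j hij => by
        rw [hEsmul, Matrix.smul_apply, hx i j hij, smul_zero] }
  have hdiag : ∀ x y i, (E x * E y) i i = E x i i * E y i i := fun x y i => by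
    rw [Matrix.mul_apply]
    refine Finset.sum_eq_single i (fun k _ hk => ?_) (by simp)
    rcases lt_or_gt_of_ne hk with h | h
    · rw [hE x i k h, zero_mul]
    · rw [hE y k i h, mul_zero]
  have hR : mprod m ⊤ ⊤ ≤ R := by
    refine Submodule.map₂_le.mpr fun x _ y _ i j hij => ?_
    rcases hij.lt_or_eq with h | rfl
    · exact hE _ _ _ h
    · rw [hEbr, Matrix.sub_apply, hdiag, hdiag, mul_comm, sub_self]
  refine ⟨n, ?_⟩
  have key : ∀ k, ∀ w ∈ lcSeries m (mprod m ⊤ ⊤) k, ∀ i : Fin n, n ≤ i + k →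
      b.repr ((1 : K) ⊗ₜ[F] w) i = 0 := by
    intro k
    induction k with
    | zero => intro w _ i hi; have := i.2; omega
    | succ k ih =>
      let Q : Submodule F M :=
        { carrier := {w | ∀ i : Fin n, n ≤ i + (k + 1) → b.repr ((1 : K) ⊗ₜ[F] w) i = 0}
          add_mem' := fun {x y} hx hy i hi => by
            rw [TensorProduct.tmul_add, map_add, Finsupp.add_apply, hx i hi, hy i hi, add_zero]
          zero_mem' := fun i _ => by simp
          smul_mem' := fun c x hx i hi => by
            have : (1 : K) ⊗ₜ[F] (c • x) = (algebraMap F K c) • ((1 : K) ⊗ₜ[F] x) := by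
              rw [TensorProduct.tmul_smul, algebraMap_smul]
            rw [this, map_smul, Finsupp.smul_apply, hx i hi, smul_zero] }
      have hQ : lcSeries m (mprod m ⊤ ⊤) (k + 1) ≤ Q := by
        refine Submodule.map₂_le.mpr fun z hz u hu i hi => ?_
        have h1 : (1 : K) ⊗ₜ[F] (m z u) = (m z).baseChange K ((1 : K) ⊗ₜ[F] u) := by simp
        rw [h1, ← LinearMap.toMatrix_mulVec_repr b b, Matrix.mulVec, dotProduct]
        refine Finset.sum_eq_zero fun j _ => ?_
        rcases le_or_gt j i with h | h
        · have : E z i j = 0 := hR hz i j h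
          exact mul_eq_zero_of_left this _
        · refine mul_eq_zero_of_right _ (ih u hu j ?_)
          have : (i : ℕ) < j := h
          omega
      exact fun w hw => hQ hw
  rw [eq_bot_iff]
  intro w hw
  have h0 : (1 : K) ⊗ₜ[F] w = 0 := by
    apply b.repr.injective
    ext i
    rw [key n w hw i (by omega)]; simp
  have hinj := Module.FaithfullyFlat.tensorProduct_mk_injective (A := F) (B := K) M
  exact hinj (by simpa using h0)

lemma tri_of_strong {F : Type*} [Field F] {M : Type*} [AddCommGroup M] [Module F M]
    [FiniteDimensional F M]
    (m : M →ₗ[F] M →ₗ[F] M) (hm : IsLeibniz m)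
    (h : IsStronglySolvable m (⊤ : Submodule F M)) :
    IsTriangulableOn m (⊤ : Submodule F M) := by
  obtain ⟨k, hk⟩ := h
  set K := AlgebraicClosure F
  let N := mprod m ⊤ ⊤
  let f : M → Module.End K (K ⊗[F] M) := fun x => (m x).baseChange K
  have hmem : ∀ x y, m x y ∈ N := fun x y => Submodule.apply_mem_map₂ m trivial trivial
  have hbr : ∀ x y v, f (m x y) v = f x (f y v) - f y (f x v) := fun x y v => by
    have h1 : m (m x y) = m x * m y - m y * m x := by
      ext c
      have := hm x y c
      simp [this]
    simp only [f, h1, LinearMap.baseChange_sub, LinearMap.baseChange_mul]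
    rfl
  let P : ℕ → Submodule K (K ⊗[F] M) := fun i =>
    Nat.casesOn i ⊤ (fun i => (lcSeries m N i).baseChange K)
  have aux : ∀ (A B : Submodule F M) z, (∀ v ∈ A, m z v ∈ B) →
      ∀ v ∈ A.baseChange K, f z v ∈ B.baseChange K := by
    intro A B z hz
    change A.baseChange K ≤ (B.baseChange K).comap (f z)
    rw [Submodule.baseChange_eq_span, Submodule.span_le]
    rintro _ ⟨u, hu, rfl⟩
    have := Submodule.tmul_mem_baseChange_of_mem (1 : K) (hz u hu)
    simpa [f] using this
  have hP : ∀ i, ∀ z ∈ (N : Set M), ∀ v ∈ P i, f z v ∈ P (i + 1) := by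
    intro i z hz v hv
    cases i with
    | zero =>
      exact aux ⊤ N z (fun v _ => hmem z v) v (by rw [Submodule.baseChange_top]; trivial)
    | succ i =>
      exact aux _ _ z (fun v hv => Submodule.apply_mem_map₂ m hz hv) v hv
  have hPk : P (k + 1) = ⊥ := by
    change (lcSeries m N k).baseChange K = ⊥
    rw [show lcSeries m N k = ⊥ from hk, Submodule.baseChange_bot]
  obtain ⟨v, hv, hf⟩ := tri_flag f
    (tri_step f (N : Set M) (fun x y => m x y) hbr hmem P rfl (k + 1) hPk hP) _ le_rfl
  let b := basisOfLinearIndependentOfCardEqFinrank' v hv (by simp)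
  have hbv : ⇑b = v := coe_basisOfLinearIndependentOfCardEqFinrank' v hv (by simp)
  refine ⟨_, b, fun x _ i j hij => ?_⟩
  rw [LinearMap.toMatrix_apply]
  have h1 := hf x j
  rw [← hbv, b.mem_span_image] at h1
  by_contra hne
  have h2 : i ∈ Set.Iic j := h1 (Finsupp.mem_support_iff.mpr hne)
  exact absurd hij (not_lt.mpr h2)

end Helpers

/-- A finite-dimensional Leibniz algebra `M` is triangulable on itself
if and only if `M` is strongly solvable. -/
theorem triangulable_iff_strongly_solvable
    {F : Type*} [Field F] {M : Type*} [AddCommGroup M] [Module F M]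
    [FiniteDimensional F M]
    (m : M →ₗ[F] M →ₗ[F] M) (hm : IsLeibniz m) :
    IsTriangulableOn m (⊤ : Submodule F M) ↔
      IsStronglySolvable m (⊤ : Submodule F M) :=
  ⟨strong_of_tri m hm, tri_of_strong m hm⟩
end

section
/- Let L be a finite-dimensional Leibniz algebra over a field F, and let S and T be subalgebras of L that are nil on L such that S is contained in the normalizer of T. Then the subalgebra S + T is nil on L. -/
/-!
Basic theory of (left) Leibniz algebras, formalized over an arbitrary field `F`.
A Leibniz algebra structure on an `F`-vector space `L` is given by a bilinear
multiplication `m : L →ₗ[F] L →ₗ[F] L` satisfying the left Leibniz identity.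
-/

open Submodule Module

attribute [local instance] LieRing.ofAssociativeRing

theorem sum_nil_aux {F : Type*} [Field F] {L : Type*} [AddCommGroup L] [Module F L]
    [FiniteDimensional F L] (B : LieSubalgebra F (Module.End F L))
    (hB : ∀ b ∈ B, IsNilpotent b) (a : Module.End F L) (ha : IsNilpotent a)
    (hab : ∀ b ∈ B, ⁅a, b⁆ ∈ B) (b : Module.End F L) (hb : b ∈ B) :
    IsNilpotent (a + b) := by
  have hnil : LieModule.IsNilpotent B L := by
    rw [LieModule.isNilpotent_iff_forall (R := F)]
    intro x
    exact hB x.1 x.2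
  obtain ⟨k, hk⟩ := (LieModule.isNilpotent_iff F B L).1 hnil
  have hstab : ∀ k, ∀ v ∈ LieModule.lowerCentralSeries F B L k,
      a v ∈ LieModule.lowerCentralSeries F B L k := by
    intro k
    induction k with
    | zero => intro v _; simp
    | succ k ih =>
      intro v hv
      rw [LieModule.lowerCentralSeries_succ] at hv ⊢
      rw [← LieSubmodule.mem_toSubmodule, LieSubmodule.lieIdeal_oper_eq_linear_span'] at hv
      induction hv using Submodule.span_induction with
      | mem y hy =>
        obtain ⟨x, hx, n, hn, rfl⟩ := hy
        have h1 : a ⁅x, n⁆ = ⁅(⟨⁅a, x.1⁆, hab _ x.2⟩ : B), n⁆ + ⁅x, a n⁆ := by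
          change a (x.1 n) = ⁅a, x.1⁆ n + x.1 (a n)
          simp [Ring.lie_def]
        rw [h1]
        exact add_mem (LieSubmodule.lie_mem_lie (LieSubmodule.mem_top _) hn)
          (LieSubmodule.lie_mem_lie (LieSubmodule.mem_top _) (ih _ hn))
      | zero => simp
      | add x y _ _ hx hy => rw [map_add]; exact add_mem hx hy
      | smul c x _ hx => rw [map_smul]; exact SMulMemClass.smul_mem c hx
  have hbstep : ∀ k, ∀ v ∈ LieModule.lowerCentralSeries F B L k,
      b v ∈ LieModule.lowerCentralSeries F B L (k + 1) := by
    intro k v hv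
    rw [LieModule.lowerCentralSeries_succ]
    exact LieSubmodule.lie_mem_lie (LieSubmodule.mem_top (⟨b, hb⟩ : B)) hv
  have hbst : ∀ k, ∀ v ∈ LieModule.lowerCentralSeries F B L k,
      b v ∈ LieModule.lowerCentralSeries F B L k := by
    intro k v hv
    exact (LieModule.lowerCentralSeries F B L k).lie_mem (x := (⟨b, hb⟩ : B)) hv
  have hpow : ∀ j k, ∀ v ∈ LieModule.lowerCentralSeries F B L k,
      (a ^ j) v ∈ LieModule.lowerCentralSeries F B L k := by
    intro j k v hv
    induction j with
    | zero => simpa using hv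
    | succ j ih => rw [pow_succ']; exact hstab k _ ih
  have hdiff : ∀ j k, ∀ v ∈ LieModule.lowerCentralSeries F B L k,
      ((a + b) ^ j) v - (a ^ j) v ∈ LieModule.lowerCentralSeries F B L (k + 1) := by
    intro j k v hv
    induction j with
    | zero => simp
    | succ j ih =>
      have h1 : ((a + b) ^ (j + 1)) v - (a ^ (j + 1)) v =
          a (((a + b) ^ j) v - (a ^ j) v) + b (((a + b) ^ j) v - (a ^ j) v)
            + b ((a ^ j) v) := by
        simp only [pow_succ', Module.End.mul_apply, LinearMap.add_apply, map_sub]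
        abel
      rw [h1]
      exact add_mem (add_mem (hstab _ _ ih) (hbst _ _ ih)) (hbstep _ _ (hpow _ _ _ hv))
  obtain ⟨n, hn⟩ := ha
  have hfin : ∀ k v, (((a + b) ^ n) ^ k) v ∈ LieModule.lowerCentralSeries F B L k := by
    intro k v
    induction k with
    | zero => simp
    | succ k ih =>
      have := hdiff n k _ ih
      rw [hn] at this
      rw [pow_succ']
      simpa using this
  refine ⟨n * k, ?_⟩
  ext v
  have := hfin k v
  rw [hk] at this
  rw [pow_mul]
  simpa using this

theorem sum_of_nil_subalgebras_is_nil
    {F : Type*} [Field F] {L : Type*} [AddCommGroup L] [Module F L]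
    [FiniteDimensional F L]
    (m : L →ₗ[F] L →ₗ[F] L) (hm : IsLeibniz m)
    (S T : Submodule F L) (hS : IsSubalg m S) (hT : IsSubalg m T)
    (hSnil : IsNilOn m S) (hTnil : IsNilOn m T)
    (hnorm : ∀ x ∈ S, ∀ t ∈ T, m x t ∈ T ∧ m t x ∈ T) :
    IsSubalg m (S ⊔ T) ∧ IsNilOn m (S ⊔ T) := by
  have hbr : ∀ x y, (⁅(m x : Module.End F L), (m y : Module.End F L)⁆ : Module.End F L)
      = m (m x y) := by
    intro x y
    ext v
    simp [Ring.lie_def, hm x y v]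
  constructor
  · intro x hx y hy
    obtain ⟨s, hs, t, ht, rfl⟩ := Submodule.mem_sup.1 hx
    obtain ⟨s', hs', t', ht', rfl⟩ := Submodule.mem_sup.1 hy
    have h1 : m (s + t) (s' + t') = m s s' + (m t s' + (m s t' + m t t')) := by
      simp only [map_add, LinearMap.add_apply]
      abel
    rw [h1]
    exact Submodule.add_mem_sup (hS _ hs _ hs')
      (add_mem (hnorm _ hs' _ ht).2 (add_mem (hnorm _ hs _ ht').1 (hT _ ht _ ht')))
  · intro x hx
    obtain ⟨s, hs, t, ht, rfl⟩ := Submodule.mem_sup.1 hx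
    let B : LieSubalgebra F (Module.End F L) :=
      { (T.map m : Submodule F (Module.End F L)) with
        lie_mem' := by
          rintro _ _ ⟨x, hx, rfl⟩ ⟨y, hy, rfl⟩
          exact ⟨m x y, hT x hx y hy, (hbr x y).symm⟩ }
    rw [map_add]
    refine sum_nil_aux B ?_ (m s) (hSnil s hs) ?_ (m t) ⟨t, ht, rfl⟩
    · rintro _ ⟨y, hy, rfl⟩
      exact hTnil y hy
    · rintro _ ⟨y, hy, rfl⟩
      exact ⟨m s y, (hnorm s hs y hy).1, (hbr s y).symm⟩
end

section
/- Let L be a finite-dimensional Leibniz algebra over a field F and let S be a subalgebra of L containing the Frattini ideal φ(L). Then nil(S/φ(L)) = nil(S)/φ(L), where nil(S) is the largest ideal of S that is nil on L and nil(S/φ(L)) is the largest ideal of S/φ(L) that is nil on L/φ(L). -/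
/-!
Basic theory of (left) Leibniz algebras, formalized over an arbitrary field `F`.
A Leibniz algebra structure on an `F`-vector space `L` is given by a bilinear
multiplication `m : L →ₗ[F] L →ₗ[F] L` satisfying the left Leibniz identity.
-/

open Submodule Module

theorem pow_mul_eq_zero_aux {F : Type*} [Field F] {L : Type*} [AddCommGroup L] [Module F L]
    (m : L →ₗ[F] L →ₗ[F] L) (hm : IsLeibniz m) (x : L) :
    ∀ s i j : ℕ, i + j = s → ∀ a b : L, ((m x : Module.End F L) ^ i) a = 0 →
      ((m x : Module.End F L) ^ j) b = 0 → ((m x : Module.End F L) ^ s) (m a b) = 0 := by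
  intro s
  induction s with
  | zero =>
    intro i j hij a b ha hb
    obtain rfl : i = 0 := by omega
    have : a = 0 := by simpa using ha
    simp [this]
  | succ s ih =>
    intro i j hij a b ha hb
    rcases i with _ | i
    · have : a = 0 := by simpa using ha
      simp [this]
    rcases j with _ | j
    · have : b = 0 := by simpa using hb
      simp [this]
    rw [pow_succ, Module.End.mul_apply, hm x a b, map_add,
      ih i (j + 1) (by omega) (m x a) b (by rwa [pow_succ, Module.End.mul_apply] at ha) hb,
      ih (i + 1) j (by omega) a (m x b) ha (by rwa [pow_succ, Module.End.mul_apply] at hb),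
      add_zero]

theorem nilpotent_of_nilpotent_mod_frattini {F : Type*} [Field F] {L : Type*} [AddCommGroup L]
    [Module F L] [FiniteDimensional F L]
    (m : L →ₗ[F] L →ₗ[F] L) (hm : IsLeibniz m) (x : L) (k : ℕ)
    (hk : ∀ y : L, ((m x : Module.End F L) ^ k) y ∈ frattiniIdeal m) :
    IsNilpotent (m x : Module.End F L) := by
  obtain ⟨n, hn, hkn, hfn⟩ :=
    ((LinearMap.eventually_isCompl_ker_pow_range_pow (m x : Module.End F L)).and
      ((Filter.eventually_ge_atTop k).and
        (Filter.eventually_ge_atTop (Module.finrank F L)))).exists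
  set f : Module.End F L := m x with hf
  have hsub : IsSubalg m (LinearMap.ker (f ^ n)) := by
    intro a ha b hb
    have h := pow_mul_eq_zero_aux m hm x (n + n) n n rfl a b ha hb
    have h1 := Module.End.ker_pow_le_ker_pow_finrank f (n + n) (LinearMap.mem_ker.2 h)
    obtain ⟨d, rfl⟩ := Nat.exists_eq_add_of_le hfn
    rw [LinearMap.mem_ker] at h1 ⊢
    rw [add_comm, pow_add, Module.End.mul_apply, h1, map_zero]
  have hrange : LinearMap.range (f ^ n) ≤ frattiniSub m := by
    rintro _ ⟨y, rfl⟩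
    obtain ⟨d, rfl⟩ := Nat.exists_eq_add_of_le hkn
    rw [pow_add, Module.End.mul_apply]
    exact (sSup_le fun I hI => hI.2 : frattiniIdeal m ≤ frattiniSub m) (hk _)
  have htop : LinearMap.ker (f ^ n) = ⊤ := by
    by_contra hne
    obtain ⟨M, ⟨hM1, hM2, hM3⟩, hmax⟩ := WellFounded.has_min
      (wellFounded_gt (α := Submodule F L))
      {T | IsSubalg m T ∧ LinearMap.ker (f ^ n) ≤ T ∧ T ≠ ⊤} ⟨_, hsub, le_rfl, hne⟩
    have hMmax : IsMaxSubalg m M := by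
      refine ⟨hM1, hM3, fun T hT hMT => ?_⟩
      by_contra! hcon
      exact hmax T ⟨hT, hM2.trans hMT, hcon.2⟩ (lt_of_le_of_ne hMT hcon.1.symm)
    have h2 : frattiniSub m ≤ M := sInf_le hMmax
    apply hM3
    rw [eq_top_iff, ← hn.sup_eq_top]
    exact sup_le hM2 (hrange.trans h2)
  exact ⟨n, LinearMap.ker_eq_top.1 htop⟩

/-- Let `L` be a finite-dimensional Leibniz algebra and `S` a
subalgebra of `L` containing the Frattini ideal `φ(L)`. Then
`nil(S/φ(L)) = nil(S)/φ(L)`. Here `nil(S)` is the largest ideal `N` of `S` that is nil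
on `L`, and `nil(S/φ(L))` is the largest ideal of `S/φ(L)` that is nil on `L/φ(L)`;
the latter is identified with its full preimage `J` in `L`, namely the largest ideal `J`
of `S` with `φ(L) ≤ J` such that left multiplication by each `x ∈ J` is nilpotent modulo
`φ(L)`. The desired equality `nil(S/φ(L)) = nil(S)/φ(L)` then reads `J = N ⊔ φ(L)`. -/
theorem nil_of_quotient_by_frattini
    {F : Type*} [Field F] {L : Type*} [AddCommGroup L] [Module F L]
    [FiniteDimensional F L]
    (m : L →ₗ[F] L →ₗ[F] L) (hm : IsLeibniz m)
    (S : Submodule F L) (hS : IsSubalg m S)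
    (hphiS : frattiniIdeal m ≤ S)
    (N : Submodule F L)
    (hN : IsGreatest {I : Submodule F L | IsIdealOf m S I ∧ IsNilOn m I} N)
    (J : Submodule F L)
    (hJ : IsGreatest {J' : Submodule F L | IsIdealOf m S J' ∧ frattiniIdeal m ≤ J' ∧
      ∀ x ∈ J', ∃ k : ℕ, ∀ y : L, ((m x : Module.End F L) ^ k) y ∈ frattiniIdeal m} J) :
    J = N ⊔ frattiniIdeal m := by
  obtain ⟨⟨hJ1, hJ2, hJ3⟩, hJmax⟩ := hJ
  obtain ⟨⟨hN1, hN2⟩, hNmax⟩ := hN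
  have hJN : J ≤ N := hNmax ⟨hJ1, fun x hx => by
    obtain ⟨k, hk⟩ := hJ3 x hx
    exact nilpotent_of_nilpotent_mod_frattini m hm x k hk⟩
  have hNJ : N ≤ J := hJmax ⟨hN1, hJ2.trans hJN, fun x hx => by
    obtain ⟨k, hk⟩ := hN2 x hx
    exact ⟨k, fun y => by rw [hk]; exact zero_mem _⟩⟩
  exact le_antisymm (hJN.trans le_sup_left) (sup_le hNJ hJ2)
end

section
/- Let L be a finite-dimensional solvable Leibniz algebra over a field F such that each two-generated proper subalgebra of L is triangulable on L. Then L is triangulable on itself. -/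
/-!
Basic theory of (left) Leibniz algebras, formalized over an arbitrary field `F`.
A Leibniz algebra structure on an `F`-vector space `L` is given by a bilinear
multiplication `m : L →ₗ[F] L →ₗ[F] L` satisfying the left Leibniz identity.
-/

open Submodule Module

section Helpers

variable {F : Type*} [Field F] {L : Type*} [AddCommGroup L] [Module F L]
variable {m : L →ₗ[F] L →ₗ[F] L}

lemma der_ideal (hm : IsLeibniz m) (k : ℕ) : IsIdeal m (derSeries m ⊤ k) := by
  induction k with
  | zero => intro x y _; exact ⟨Submodule.mem_top, Submodule.mem_top⟩
  | succ k ih =>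
    intro x y hy
    have key : derSeries m ⊤ (k + 1) ≤
        (derSeries m ⊤ (k + 1)).comap (m x) ⊓ (derSeries m ⊤ (k + 1)).comap (m.flip x) := by
      refine Submodule.map₂_le.2 fun a ha b hb => ?_
      have h1 : ∀ c ∈ derSeries m ⊤ k, ∀ d ∈ derSeries m ⊤ k,
          m c d ∈ derSeries m ⊤ (k + 1) :=
        fun c hc d hd => Submodule.apply_mem_map₂ m hc hd
      refine ⟨?_, ?_⟩
      · change m x (m a b) ∈ derSeries m ⊤ (k + 1)
        rw [hm]
        exact add_mem (h1 _ (ih x a ha).1 _ hb) (h1 _ ha _ (ih x b hb).1)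
      · change m (m a b) x ∈ derSeries m ⊤ (k + 1)
        have : m (m a b) x = m a (m b x) - m b (m a x) := by
          rw [hm a b x]; abel
        rw [this]
        exact sub_mem (h1 _ ha _ (ih x b hb).2) (h1 _ hb _ (ih x a ha).2)
    exact key hy

lemma der_one_mem (x y : L) : m x y ∈ derSeries m ⊤ 1 :=
  Submodule.apply_mem_map₂ m Submodule.mem_top Submodule.mem_top

/-- A relative form of Jacobson's theorem on weakly closed sets. -/
lemma jacobson_rel {K V : Type*} [Field K] [Algebra F K] [AddCommGroup V] [Module K V]
    [Module F V] [IsScalarTower F K V] [FiniteDimensional K V]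
    (hm : IsLeibniz m) (hsolv : IsSolvableAlg m)
    (ρ : L →ₗ[F] Module.End K V) (hρ : ∀ x y v, ρ (m x y) v = ρ x (ρ y v) - ρ y (ρ x v))
    (W : Submodule K V) (hW : ∀ x, ∀ w ∈ W, ρ x w ∈ W) (hne : W ≠ ⊤)
    (hnil : ∀ x y v, ∃ j : ℕ, (ρ (m x y) ^ j) v ∈ W) :
    ∃ v, v ∉ W ∧ ∀ u ∈ derSeries m ⊤ 1, ρ u v ∈ W := by
  have step : ∀ k, (∃ v, v ∉ W ∧ ∀ u ∈ derSeries m ⊤ (k + 2), ρ u v ∈ W) →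
      (∃ v, v ∉ W ∧ ∀ u ∈ derSeries m ⊤ (k + 1), ρ u v ∈ W) := by
    rintro k ⟨v₀, hv₀, hv₀'⟩
    let U₀ : Submodule K V :=
      { carrier := {v | ∀ u ∈ derSeries m ⊤ (k + 2), ρ u v ∈ W}
        zero_mem' := fun u _ => by simp
        add_mem' := fun {a b} ha hb u hu => by
          rw [map_add]; exact add_mem (ha u hu) (hb u hu)
        smul_mem' := fun c a ha u hu => by
          rw [map_smul]; exact W.smul_mem c (ha u hu) }
    let S : Set (Submodule K V) :=
      {U | W < U ∧ U ≤ U₀ ∧ ∀ u ∈ derSeries m ⊤ (k + 1), ∀ v ∈ U, ρ u v ∈ U}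
    have hU₀ : U₀ ∈ S := by
      refine ⟨?_, le_rfl, ?_⟩
      · refine lt_of_le_of_ne (fun w hw u _ => hW u w hw) ?_
        rintro h
        exact hv₀ (h ▸ (show v₀ ∈ U₀ from hv₀'))
      · intro u _ v hv w hw
        have h1 := hρ w u v
        have h2 : ρ w (ρ u v) = ρ (m w u) v + ρ u (ρ w v) := by rw [h1]; abel
        rw [h2]
        exact add_mem (hv _ (der_ideal hm (k + 2) u w hw).2) (hW _ _ (hv _ hw))
    obtain ⟨U, ⟨hWU, hUU₀, hUinv⟩, hmin⟩ :=
      (wellFounded_lt (α := Submodule K V)).has_min S ⟨U₀, hU₀⟩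
    obtain ⟨v, hvU, hvW⟩ := SetLike.exists_of_lt hWU
    refine ⟨v, hvW, ?_⟩
    have hker : ∀ x ∈ derSeries m ⊤ k, ∀ y ∈ derSeries m ⊤ k, ρ (m x y) v ∈ W := by
      intro x hx y hy
      have hxy : m x y ∈ derSeries m ⊤ (k + 1) := Submodule.apply_mem_map₂ m hx hy
      have hU' : U ⊓ W.comap (ρ (m x y)) ∈ S := by
        refine ⟨?_, inf_le_left.trans hUU₀, ?_⟩
        · refine lt_of_le_of_ne (le_inf hWU.le (fun w hw => hW _ w hw)) ?_
          intro h
          -- last power not in W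
          have hpow : ∀ j, (ρ (m x y) ^ j) v ∈ U ∧ (ρ (m x y) ^ j) v ∉ W := by
            intro j
            induction j with
            | zero => exact ⟨hvU, hvW⟩
            | succ j ih =>
              rw [pow_succ']
              refine ⟨hUinv _ hxy _ ih.1, fun hc => ih.2 ?_⟩
              rw [h]
              exact ⟨ih.1, hc⟩
          obtain ⟨j, hj⟩ := hnil x y v
          exact (hpow j).2 hj
        · rintro u hu w ⟨hw1, hw2⟩
          refine ⟨hUinv u hu w hw1, ?_⟩
          change ρ (m x y) (ρ u w) ∈ W
          have h1 := hρ (m x y) u w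
          have h2 : ρ (m x y) (ρ u w) = ρ (m (m x y) u) w + ρ u (ρ (m x y) w) := by
            rw [h1]; abel
          rw [h2]
          exact add_mem (hUU₀ hw1 _ (Submodule.apply_mem_map₂ m hxy hu)) (hW _ _ hw2)
      have : U ⊓ W.comap (ρ (m x y)) = U := by
        by_contra hne'
        exact hmin _ hU' (lt_of_le_of_ne inf_le_left hne')
      exact (this.ge hvU).2
    let T : Submodule F L :=
      { carrier := {u | ρ u v ∈ W}
        zero_mem' := by simp
        add_mem' := fun {a b} ha hb => by
          change ρ (a + b) v ∈ W
          rw [map_add]; exact add_mem ha hb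
        smul_mem' := fun c a ha => by
          change ρ (c • a) v ∈ W
          rw [map_smul, LinearMap.smul_apply]
          exact W.smul_of_tower_mem c ha }
    have hT : derSeries m ⊤ (k + 1) ≤ T := Submodule.map₂_le.2 hker
    exact fun u hu => hT hu
  obtain ⟨n, hn⟩ := hsolv
  have hn1 : ∃ v, v ∉ W ∧ ∀ u ∈ derSeries m ⊤ (n + 1), ρ u v ∈ W := by
    obtain ⟨v, hv⟩ : ∃ v, v ∉ W := by
      by_contra! h
      exact hne (Submodule.eq_top_iff'.2 h)
    refine ⟨v, hv, fun u hu => ?_⟩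
    have : derSeries m ⊤ (n + 1) = ⊥ := by
      change Submodule.map₂ m (derSeries m ⊤ n) (derSeries m ⊤ n) = ⊥
      rw [hn]; simp
    rw [this, Submodule.mem_bot] at hu
    simp [hu]
  clear hn
  induction n with
  | zero => exact hn1
  | succ n ih => exact ih (step n hn1)

/-- If all products act nilpotently modulo the ideal `C`, so does the derived algebra. -/
lemma der_nil_mod [FiniteDimensional F L] (hm : IsLeibniz m) (hsolv : IsSolvableAlg m)
    (C : Submodule F L) (hC : IsIdeal m C)
    (hnil : ∀ x y v, ∃ j : ℕ, ((m (m x y) : Module.End F L) ^ j) v ∈ C) :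
    ∀ u ∈ derSeries m ⊤ 1, ∀ v, ∃ j : ℕ, ((m u : Module.End F L) ^ j) v ∈ C := by
  let S : Set (Submodule F L) :=
    {W | C ≤ W ∧ (∀ x, ∀ w ∈ W, m x w ∈ W) ∧
      ∀ u ∈ derSeries m ⊤ 1, ∀ v ∈ W, ∃ j : ℕ, ((m u : Module.End F L) ^ j) v ∈ C}
  obtain ⟨W, ⟨hCW, hWinv, hWnil⟩, hmax⟩ :=
    (wellFounded_gt (α := Submodule F L)).has_min S
      ⟨C, le_rfl, fun x w hw => (hC x w hw).1, fun u _ v hv => ⟨0, hv⟩⟩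
  by_cases htop : W = ⊤
  · intro u hu v
    exact hWnil u hu v (htop ▸ Submodule.mem_top)
  · exfalso
    obtain ⟨v, hvW, hv⟩ := jacobson_rel (K := F) (V := L) hm hsolv m
      (fun x y v => by rw [hm x y v]; abel) W hWinv htop
      (fun x y v => by
        obtain ⟨j, hj⟩ := hnil x y v
        exact ⟨j, hCW hj⟩)
    let W' : Submodule F L :=
      { carrier := {v | ∀ u ∈ derSeries m ⊤ 1, m u v ∈ W}
        zero_mem' := fun u _ => by simp
        add_mem' := fun {a b} ha hb u hu => by
          rw [map_add]; exact add_mem (ha u hu) (hb u hu)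
        smul_mem' := fun c a ha u hu => by
          rw [map_smul]; exact W.smul_mem c (ha u hu) }
    have hlt : W < W' := by
      refine lt_of_le_of_ne (fun w hw u _ => hWinv u w hw) ?_
      intro h
      exact hvW (h ▸ (show v ∈ W' from hv))
    refine hmax W' ⟨hCW.trans hlt.le, ?_, ?_⟩ hlt
    · intro x w hw u hu
      rw [hm u x w]
      exact add_mem (hw _ (der_ideal hm 1 x u hu).2) (hWinv _ _ (hw u hu))
    · intro u hu w hw
      obtain ⟨j, hj⟩ := hWnil u hu _ (hw u hu)
      exact ⟨j + 1, by rw [pow_succ]; exact hj⟩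

lemma uniform_pow [FiniteDimensional F L] (φ : Module.End F L) (C : Submodule F L)
    (hC : ∀ v ∈ C, φ v ∈ C) (h : ∀ v, ∃ j : ℕ, (φ ^ j) v ∈ C) :
    ∃ j : ℕ, ∀ v, (φ ^ j) v ∈ C := by
  let f : ℕ →o Submodule F L :=
    ⟨fun j => C.comap (φ ^ j), monotone_nat_of_le_succ fun j v hv => by
      change (φ ^ (j + 1)) v ∈ C
      rw [pow_succ']
      exact hC _ hv⟩
  obtain ⟨n, hn⟩ := monotone_stabilizes_iff_noetherian.2 (inferInstance : IsNoetherian F L) f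
  refine ⟨n, fun v => ?_⟩
  obtain ⟨j, hj⟩ := h v
  have h1 : v ∈ f (max n j) := f.monotone (le_max_right n j) hj
  rw [← hn _ (le_max_left n j)] at h1
  exact h1

/-- Generalized kernel of left multiplication is a subalgebra. -/
lemma ker_pow_mul (hm : IsLeibniz m) (z : L) (n : ℕ) : ∀ (i j : ℕ) (v w : L), i + j = n →
    ((m z : Module.End F L) ^ i) v = 0 → ((m z : Module.End F L) ^ j) w = 0 →
    ((m z : Module.End F L) ^ n) (m v w) = 0 := by
  induction n with
  | zero =>
    intro i j v w hij hv hw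
    obtain ⟨rfl, rfl⟩ : i = 0 ∧ j = 0 := by omega
    simp only [pow_zero, Module.End.one_apply] at hv hw ⊢
    simp [hv]
  | succ n ih =>
    intro i j v w hij hv hw
    rw [pow_succ, Module.End.mul_apply, hm z v w, map_add]
    rcases i with _ | i
    · simp only [pow_zero, Module.End.one_apply] at hv
      simp [hv]
    rcases j with _ | j
    · simp only [pow_zero, Module.End.one_apply] at hw
      simp [hw]
    rw [ih i (j + 1) (m z v) w (by omega) (by rwa [pow_succ] at hv) hw,
      ih (i + 1) j v (m z w) (by omega) hv (by rwa [pow_succ] at hw), add_zero]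

/-- Main inductive step. -/
lemma main_nil [FiniteDimensional F L] (hm : IsLeibniz m) (hsolv : IsSolvableAlg m)
    (hgen : ∀ (E : Submodule F L), IsSubalg m E → E ≠ ⊤ → ∀ x ∈ E, ∀ y ∈ E,
      IsNilpotent (m (m x y) : Module.End F L)) :
    ∀ k, ∀ u ∈ derSeries m ⊤ 1, ∀ v, ∃ j : ℕ,
      ((m u : Module.End F L) ^ j) v ∈ derSeries m ⊤ k := by
  intro k
  induction k with
  | zero => intro u _ v; exact ⟨0, Submodule.mem_top⟩
  | succ k ih =>
    by_cases hall : ∀ z ∈ derSeries m ⊤ 1, IsNilpotent (m z : Module.End F L)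
    · intro u hu v
      obtain ⟨j, hj⟩ := hall u hu
      exact ⟨j, by rw [hj]; simp⟩
    push Not at hall
    obtain ⟨z, hz, hzn⟩ := hall
    obtain ⟨j, hj⟩ := uniform_pow (m z) (derSeries m ⊤ k)
      (fun v hv => (der_ideal hm k z v hv).1) (ih z hz)
    obtain ⟨n, hn⟩ := Filter.eventually_atTop.1
      (LinearMap.eventually_isCompl_ker_pow_range_pow (m z : Module.End F L))
    set φ : Module.End F L := m z with hφ
    set N := max n j with hN
    have hcompl := hn N (le_max_left _ _)
    let E : Submodule F L :=
      { carrier := {v | ∃ i : ℕ, (φ ^ i) v = 0}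
        zero_mem' := ⟨0, by simp⟩
        add_mem' := by
          rintro a b ⟨i, hi⟩ ⟨l, hl⟩
          refine ⟨i + l, ?_⟩
          rw [map_add]
          nth_rewrite 1 [add_comm i l]
          rw [pow_add, pow_add, Module.End.mul_apply, Module.End.mul_apply, hi, hl]
          simp
        smul_mem' := by
          rintro c a ⟨i, hi⟩
          exact ⟨i, by rw [map_smul, hi, smul_zero]⟩ }
    have hE : IsSubalg m E := by
      rintro x ⟨i, hi⟩ y ⟨l, hl⟩
      exact ⟨i + l, ker_pow_mul hm z (i + l) i l x y rfl hi hl⟩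
    have hEtop : E ≠ ⊤ := by
      intro h
      obtain ⟨i, hi⟩ := uniform_pow φ ⊥ (by simp) (fun v => by
        have : v ∈ E := h ▸ Submodule.mem_top
        obtain ⟨i, hi⟩ := this
        exact ⟨i, by rw [hi]; exact Submodule.zero_mem _⟩)
      exact hzn ⟨i, LinearMap.ext fun v => by simpa using hi v⟩
    have hdecomp : ∀ x, ∃ x₀ ∈ E, x - x₀ ∈ derSeries m ⊤ k := by
      intro x
      have hx : x ∈ LinearMap.ker (φ ^ N) ⊔ LinearMap.range (φ ^ N) := by
        rw [hcompl.sup_eq_top]; exact Submodule.mem_top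
      obtain ⟨e, he, r, ⟨w, rfl⟩, rfl⟩ := Submodule.mem_sup.1 hx
      refine ⟨e, ⟨N, he⟩, ?_⟩
      rw [add_sub_cancel_left, show N = j + (N - j) by omega, pow_add]
      exact hj _
    refine der_nil_mod hm hsolv _ (der_ideal hm (k + 1)) ?_
    intro x y v
    obtain ⟨x₀, hx₀, hx⟩ := hdecomp x
    obtain ⟨y₀, hy₀, hy⟩ := hdecomp y
    obtain ⟨i, hi⟩ := ih (m x y) (der_one_mem x y) v
    obtain ⟨l, hl⟩ := hgen E hE hEtop x₀ hx₀ y₀ hy₀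
    have hdiff : m x y - m x₀ y₀ ∈ derSeries m ⊤ k := by
      have : m x y - m x₀ y₀ = m (x - x₀) y + m x₀ (y - y₀) := by
        simp
      rw [this]
      exact add_mem (der_ideal hm k y _ hx).2 (der_ideal hm k x₀ _ hy).1
    have hcmp : ∀ l : ℕ, ∀ a ∈ derSeries m ⊤ k,
        ((m (m x₀ y₀) : Module.End F L) ^ l) a ∈ derSeries m ⊤ k ∧
        ((m (m x y) : Module.End F L) ^ l) a - ((m (m x₀ y₀) : Module.End F L) ^ l) a
          ∈ derSeries m ⊤ (k + 1) := by
      intro l a ha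
      induction l with
      | zero => exact ⟨ha, by simp⟩
      | succ l ihl =>
        rw [pow_succ', pow_succ', Module.End.mul_apply, Module.End.mul_apply]
        refine ⟨(der_ideal hm k _ _ ihl.1).1, ?_⟩
        have : ∀ p q : L, m (m x y) p - m (m x₀ y₀) q
            = m (m x y) (p - q) + m (m x y - m x₀ y₀) q := by
          intro p q; simp
        rw [this]
        exact add_mem (der_ideal hm (k + 1) _ _ ihl.2).1
          (Submodule.apply_mem_map₂ m hdiff ihl.1)
    refine ⟨l + i, ?_⟩
    have h1 := (hcmp l _ hi).2
    rw [hl] at h1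
    rw [pow_add, Module.End.mul_apply]
    simpa using h1

lemma upper_mul_diag {K : Type*} [Field K] {n : ℕ} (A B : Matrix (Fin n) (Fin n) K)
    (hA : ∀ i j, j < i → A i j = 0) (hB : ∀ i j, j < i → B i j = 0) :
    (∀ i j, j < i → (A * B) i j = 0) ∧ ∀ i, (A * B) i i = A i i * B i i := by
  refine ⟨fun i j hij => ?_, fun i => ?_⟩
  · rw [Matrix.mul_apply]
    refine Finset.sum_eq_zero fun l _ => ?_
    rcases lt_or_ge l i with h | h
    · rw [hA i l h, zero_mul]
    · rw [hB l j (hij.trans_le h), mul_zero]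
  · rw [Matrix.mul_apply]
    refine Finset.sum_eq_single i (fun l _ hl => ?_) (by simp)
    rcases lt_or_gt_of_ne hl with h | h
    · rw [hA i l h, zero_mul]
    · rw [hB l i h, mul_zero]

lemma strict_upper_nilpotent {K : Type*} [Field K] {n : ℕ} (A : Matrix (Fin n) (Fin n) K)
    (hA : ∀ i j, j ≤ i → A i j = 0) : IsNilpotent A := by
  have h1 : A.charpoly = Polynomial.X ^ n := by
    rw [Matrix.charpoly_of_isUpperTriangular A (fun i j hij => hA i j (le_of_lt hij))]
    simp [hA]
  refine ⟨n, ?_⟩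
  have h2 := Matrix.aeval_self_charpoly A
  rw [h1] at h2
  simpa using h2

lemma nilpotent_of_triangulable [FiniteDimensional F L] (hm : IsLeibniz m)
    (S : Submodule F L) (hS : IsTriangulableOn m S) (x y : L) (hx : x ∈ S) (hy : y ∈ S) :
    IsNilpotent (m (m x y) : Module.End F L) := by
  obtain ⟨n, b, hb⟩ := hS
  have hinj : Function.Injective (Module.End.baseChangeHom F (AlgebraicClosure F) L) :=
    LinearMap.baseChangeHom_injective F L (AlgebraicClosure F)
  rw [← IsNilpotent.map_iff hinj]
  have e : (m (m x y) : Module.End F L) = m x * m y - m y * m x := by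
    ext v
    simp only [LinearMap.sub_apply, Module.End.mul_apply]
    rw [hm x y v]; abel
  rw [e, map_sub, map_mul, map_mul]
  set X := Module.End.baseChangeHom F (AlgebraicClosure F) L (m x) with hX
  set Y := Module.End.baseChangeHom F (AlgebraicClosure F) L (m y) with hY
  have hinj2 : Function.Injective (LinearMap.toMatrixAlgEquiv b) :=
    (LinearMap.toMatrixAlgEquiv b).injective
  rw [← IsNilpotent.map_iff hinj2, map_sub, map_mul, map_mul]
  have hA : ∀ i j, j < i → (LinearMap.toMatrixAlgEquiv b X) i j = 0 := hb x hx
  have hB : ∀ i j, j < i → (LinearMap.toMatrixAlgEquiv b Y) i j = 0 := hb y hy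
  obtain ⟨h1, h2⟩ := upper_mul_diag _ _ hA hB
  obtain ⟨h3, h4⟩ := upper_mul_diag _ _ hB hA
  apply strict_upper_nilpotent
  intro i j hij
  rw [Matrix.sub_apply]
  rcases hij.lt_or_eq with h | rfl
  · rw [h1 _ _ h, h3 _ _ h, sub_zero]
  · rw [h2, h4, mul_comm, sub_self]

/-- Common eigenvector modulo an invariant subspace. -/
lemma common_eigen {K V : Type*} [Field K] [IsAlgClosed K] [Algebra F K] [AddCommGroup V]
    [Module K V] [Module F V] [IsScalarTower F K V] [FiniteDimensional K V]
    (hm : IsLeibniz m) (hsolv : IsSolvableAlg m)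
    (ρ : L →ₗ[F] Module.End K V) (hρ : ∀ x y v, ρ (m x y) v = ρ x (ρ y v) - ρ y (ρ x v))
    (hnil : ∀ x y, IsNilpotent (ρ (m x y)))
    (W : Submodule K V) (hW : ∀ x, ∀ w ∈ W, ρ x w ∈ W) (hne : W ≠ ⊤) :
    ∃ v, v ∉ W ∧ ∀ x, ∃ c : K, ρ x v - c • v ∈ W := by
  obtain ⟨v₀, hv₀, hv₀'⟩ := jacobson_rel hm hsolv ρ hρ W hW hne (fun x y v => by
    obtain ⟨j, hj⟩ := hnil x y
    exact ⟨j, by rw [hj]; simp⟩)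
  let U₀ : Submodule K V :=
    { carrier := {v | ∀ u ∈ derSeries m ⊤ 1, ρ u v ∈ W}
      zero_mem' := fun u _ => by simp
      add_mem' := fun {a b} ha hb u hu => by
        rw [map_add]; exact add_mem (ha u hu) (hb u hu)
      smul_mem' := fun c a ha u hu => by
        rw [map_smul]; exact W.smul_mem c (ha u hu) }
  let S : Set (Submodule K V) := {U | W < U ∧ U ≤ U₀ ∧ ∀ u, ∀ v ∈ U, ρ u v ∈ U}
  have hU₀ : U₀ ∈ S := by
    refine ⟨?_, le_rfl, ?_⟩
    · refine lt_of_le_of_ne (fun w hw u _ => hW u w hw) ?_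
      rintro h
      exact hv₀ (h ▸ (show v₀ ∈ U₀ from hv₀'))
    · intro u v hv w hw
      have h1 := hρ w u v
      have h2 : ρ w (ρ u v) = ρ (m w u) v + ρ u (ρ w v) := by rw [h1]; abel
      rw [h2]
      exact add_mem (hv _ (der_ideal hm 1 u w hw).2) (hW _ _ (hv _ hw))
  obtain ⟨U, ⟨hWU, hUU₀, hUinv⟩, hmin⟩ :=
    (wellFounded_lt (α := Submodule K V)).has_min S ⟨U₀, hU₀⟩
  obtain ⟨v, hvU, hvW⟩ := SetLike.exists_of_lt hWU
  refine ⟨v, hvW, fun x => ?_⟩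
  -- an eigenvalue of `ρ x` on `U / W`
  obtain ⟨c, w, hwU, hwW, hw⟩ : ∃ c : K, ∃ w ∈ U, w ∉ W ∧ ρ x w - c • w ∈ W := by
    let f : Module.End K U := (ρ x).restrict (hUinv x)
    let W' : Submodule K U := W.comap U.subtype
    have hW' : W' ≤ W'.comap f := fun w hw => hW x _ hw
    let g : Module.End K (U ⧸ W') := W'.mapQ W' f hW'
    have : Nontrivial (U ⧸ W') := by
      rw [Submodule.Quotient.nontrivial_iff]
      intro h
      have : (⟨v, hvU⟩ : U) ∈ W' := h ▸ Submodule.mem_top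
      exact hvW this
    obtain ⟨c, hc⟩ := Module.End.exists_eigenvalue g
    obtain ⟨q, hq⟩ := hc.exists_hasEigenvector
    obtain ⟨w, rfl⟩ := W'.mkQ_surjective q
    refine ⟨c, w, w.2, ?_, ?_⟩
    · intro h
      exact hq.2 ((Submodule.Quotient.mk_eq_zero W').2 h)
    · have h1 := hq.apply_eq_smul
      have h2 : W'.mkQ (f w - c • w) = 0 := by
        rw [map_sub, map_smul, sub_eq_zero]
        exact h1
      exact (Submodule.Quotient.mk_eq_zero W').1 h2
  refine ⟨c, ?_⟩
  have hU' : U ⊓ W.comap (ρ x - c • LinearMap.id) ∈ S := by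
    have hmem : ∀ v, v ∈ W.comap (ρ x - c • LinearMap.id) ↔ ρ x v - c • v ∈ W := by
      intro v; simp
    refine ⟨?_, inf_le_left.trans hUU₀, ?_⟩
    · refine lt_of_le_of_ne (le_inf hWU.le (fun w hw => ?_)) ?_
      · rw [hmem]; exact sub_mem (hW _ _ hw) (W.smul_mem c hw)
      · intro h
        exact hwW (h ▸ ⟨hwU, (hmem w).2 hw⟩)
    · rintro u w ⟨hw1, hw2⟩
      refine ⟨hUinv u w hw1, ?_⟩
      have hw2' := (hmem w).1 hw2
      refine (hmem _).2 ?_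
      have h1 := hρ x u w
      have h2 : ρ x (ρ u w) - c • ρ u w = ρ (m x u) w + ρ u (ρ x w - c • w) := by
        rw [h1, map_sub, map_smul]; abel
      rw [h2]
      exact add_mem (hUU₀ hw1 _ (der_one_mem x u)) (hW _ _ hw2')
  have hEq : U ⊓ W.comap (ρ x - c • LinearMap.id) = U := by
    by_contra hne'
    exact hmin _ hU' (lt_of_le_of_ne inf_le_left hne')
  simpa using (hEq.ge hvU).2

lemma flag_exists {ι K V : Type*} [Field K] [AddCommGroup V] [Module K V]
    [FiniteDimensional K V] (ρ : ι → Module.End K V)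
    (h : ∀ W : Submodule K V, (∀ x, ∀ w ∈ W, ρ x w ∈ W) → W ≠ ⊤ →
      ∃ v, v ∉ W ∧ ∀ x, ∃ c : K, ρ x v - c • v ∈ W) (k : ℕ) :
    k ≤ Module.finrank K V → ∃ f : Fin k → V, LinearIndependent K f ∧
      ∀ x j, ρ x (f j) ∈ Submodule.span K (f '' {i | i ≤ j}) := by
  induction k with
  | zero => intro _; exact ⟨Fin.elim0, linearIndependent_empty_type, fun x j => j.elim0⟩
  | succ k ih =>
    intro hk
    obtain ⟨f, hf, hfi⟩ := ih (by omega)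
    let W := Submodule.span K (Set.range f)
    have hWinv : ∀ x, ∀ w ∈ W, ρ x w ∈ W := by
      intro x
      have : W ≤ W.comap (ρ x) := by
        refine Submodule.span_le.2 ?_
        rintro _ ⟨j, rfl⟩
        exact Submodule.span_mono (Set.image_subset_range _ _) (hfi x j)
      exact this
    have hWne : W ≠ ⊤ := by
      intro htop
      have h1 : Module.finrank K W = k := by
        simpa using finrank_span_eq_card hf
      rw [htop, finrank_top] at h1
      omega
    obtain ⟨v, hv, hvc⟩ := h W hWinv hWne
    refine ⟨Fin.snoc f v, hf.finSnoc hv, fun x j => ?_⟩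
    induction j using Fin.lastCases with
    | last =>
      obtain ⟨c, hc⟩ := hvc x
      rw [Fin.snoc_last]
      have hW2 : W ≤ Submodule.span K
          ((Fin.snoc f v : Fin (k + 1) → V) '' {i | i ≤ Fin.last k}) := by
        refine Submodule.span_mono ?_
        rintro _ ⟨j, rfl⟩
        exact ⟨j.castSucc, Fin.le_last _, by simp⟩
      have h3 : v ∈ Submodule.span K
          ((Fin.snoc f v : Fin (k + 1) → V) '' {i | i ≤ Fin.last k}) :=
        Submodule.subset_span ⟨Fin.last k, le_refl (Fin.last k), by simp⟩
      have := add_mem (hW2 hc) (Submodule.smul_mem _ c h3)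
      simpa using this
    | cast j =>
      rw [Fin.snoc_castSucc]
      refine Submodule.span_mono ?_ (hfi x j)
      rintro _ ⟨i, hi, rfl⟩
      exact ⟨i.castSucc, Fin.castSucc_le_castSucc_iff.2 hi, by simp⟩

end Helpers

/-- Let `L` be a finite-dimensional solvable Leibniz algebra such that
each two-generated proper subalgebra of `L` is triangulable on `L`. Then `L` is
triangulable on itself. -/
theorem triangulable_of_two_generated_triangulable
    {F : Type*} [Field F] {L : Type*} [AddCommGroup L] [Module F L]
    [FiniteDimensional F L]
    (m : L →ₗ[F] L →ₗ[F] L) (hm : IsLeibniz m)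
    (hsolv : IsSolvableAlg m)
    (h2gen : ∀ S : Submodule F L, IsSubalg m S → S ≠ ⊤ → TwoGenerated m S →
      IsTriangulableOn m S) :
    IsTriangulableOn m (⊤ : Submodule F L) := by
  have hgen : ∀ (E : Submodule F L), IsSubalg m E → E ≠ ⊤ → ∀ x ∈ E, ∀ y ∈ E,
      IsNilpotent (m (m x y) : Module.End F L) := by
    intro E hE hEtop x hx y hy
    have hle : genBy m {x, y} ≤ E := sInf_le ⟨hE, by
      rintro z (rfl | rfl)
      · exact hx
      · exact hy⟩
    have hsub : ({x, y} : Set L) ⊆ genBy m {x, y} := by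
      intro z hz
      refine Submodule.mem_sInf.2 fun S hS => hS.2 hz
    have hS : IsSubalg m (genBy m {x, y}) := by
      intro a ha b hb
      refine Submodule.mem_sInf.2 fun S hS => ?_
      exact hS.1 a (Submodule.mem_sInf.1 ha S hS) b (Submodule.mem_sInf.1 hb S hS)
    refine nilpotent_of_triangulable hm _
      (h2gen _ hS (fun h => hEtop (top_le_iff.1 (h ▸ hle))) ⟨x, y, rfl⟩) x y
      (hsub (by simp)) (hsub (by simp))
  have hnil : ∀ x y, IsNilpotent (m (m x y) : Module.End F L) := by
    intro x y
    obtain ⟨n, hn⟩ := hsolv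
    have h := main_nil hm ⟨n, hn⟩ hgen n (m x y) (der_one_mem x y)
    rw [hn] at h
    obtain ⟨j, hj⟩ := uniform_pow _ ⊥ (by simp) h
    exact ⟨j, LinearMap.ext fun v => by simpa using hj v⟩
  let K := AlgebraicClosure F
  let β := Module.End.baseChangeHom F K L
  let ρ : L →ₗ[F] Module.End K (TensorProduct F K L) := β.toLinearMap ∘ₗ m
  have hρ : ∀ x y v, ρ (m x y) v = ρ x (ρ y v) - ρ y (ρ x v) := by
    intro x y v
    have e : (m (m x y) : Module.End F L) = m x * m y - m y * m x := by
      ext v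
      simp only [LinearMap.sub_apply, Module.End.mul_apply]
      rw [hm x y v]; abel
    change β (m (m x y)) v = β (m x) (β (m y) v) - β (m y) (β (m x) v)
    rw [e, map_sub, map_mul, map_mul]
    rfl
  obtain ⟨f, hf, hfi⟩ := flag_exists (fun x => ρ x)
    (common_eigen hm hsolv ρ hρ (fun x y => (hnil x y).map β)) _ le_rfl
  let b := Basis.mk hf (hf.span_eq_top_of_card_eq_finrank' (by simp)).ge
  refine ⟨_, b, fun x _ i j hij => ?_⟩
  have h1 : ρ x (b j) ∈ Submodule.span K (b '' {i | i ≤ j}) := by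
    have : (b : _ → _) = f := Basis.coe_mk _ _
    rw [this]
    exact hfi x j
  rw [Basis.mem_span_image] at h1
  rw [LinearMap.toMatrix_apply]
  by_contra hne
  have h2 : i ∈ {i | i ≤ j} := h1 (Finsupp.mem_support_iff.2 hne)
  exact absurd h2 (not_le.2 hij)
end

section
/- Let L be a finite-dimensional Leibniz algebra over a field F that is minimally non-triangulable, i.e. every proper subalgebra of L is triangulable on L but L itself is not triangulable on itself. Then L is two-generated and L/φ(L) is a simple Leibniz algebra. -/
/-!
Basic theory of (left) Leibniz algebras, formalized over an arbitrary field `F`.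
A Leibniz algebra structure on an `F`-vector space `L` is given by a bilinear
multiplication `m : L →ₗ[F] L →ₗ[F] L` satisfying the left Leibniz identity.
-/

open Submodule Module

/-! ### Nilpotency of Lie-closed sets of nilpotent elements (Jacobson) -/

/-- Adding one nilpotent element that normalizes a nilpotent subspace keeps it nilpotent. -/
lemma nilp_sup_span {F A : Type*} [Field F] [Ring A] [Algebra F A]
    (T : Submodule F A) (s : A) (hs : IsNilpotent s) (n : ℕ) (hT : T ^ n = ⊥)
    (hTs : ∀ t ∈ T, s * t - t * s ∈ T) : ∃ N, (T ⊔ Submodule.span F {s}) ^ N = ⊥ := by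
  obtain ⟨k, hk⟩ := hs
  set P := Submodule.span F {s} with hP
  have hPT : P * T ≤ T * P ⊔ T := by
    rw [hP, Submodule.mul_le]
    intro p hp t ht
    obtain ⟨c, rfl⟩ := Submodule.mem_span_singleton.1 hp
    have : c • s * t = (t * (c • s)) + c • (s * t - t * s) := by
      simp [smul_sub]
    rw [this]
    exact Submodule.add_mem_sup (Submodule.mul_mem_mul ht
      (Submodule.smul_mem _ _ (Submodule.mem_span_singleton_self s)))
      (Submodule.smul_mem _ _ (hTs t ht))
  have hPE : ∀ j, P * (T ^ j * ⊤) ≤ T ^ j * ⊤ := by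
    intro j
    induction j with
    | zero => rw [pow_zero, one_mul]; exact le_top
    | succ j ih =>
      rw [pow_succ', mul_assoc, ← mul_assoc P]
      calc P * T * (T ^ j * ⊤) ≤ (T * P ⊔ T) * (T ^ j * ⊤) := by gcongr
        _ = T * (P * (T ^ j * ⊤)) ⊔ T * (T ^ j * ⊤) := by rw [Submodule.sup_mul, mul_assoc]
        _ ≤ T * (T ^ j * ⊤) := sup_le (by gcongr) le_rfl
  have hPiE : ∀ i j, P ^ i * (T ^ j * ⊤) ≤ T ^ j * ⊤ := by
    intro i j
    induction i with
    | zero => simp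
    | succ i ih =>
      rw [pow_succ', mul_assoc]
      exact (mul_le_mul_right ih P).trans (hPE j)
  have hTE : ∀ j, T * (T ^ j * ⊤) = T ^ (j + 1) * (⊤ : Submodule F A) := by
    intro j; rw [pow_succ', mul_assoc]
  have hTE' : ∀ j, T ^ (j + 1) * (⊤ : Submodule F A) ≤ T ^ j * ⊤ := by
    intro j; rw [pow_succ, mul_assoc]; gcongr; exact le_top
  have key : ∀ i j, (T ⊔ P) ^ i * (T ^ j * ⊤) ≤ P ^ i * (T ^ j * ⊤) ⊔ T ^ (j + 1) * ⊤ := by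
    intro i j
    induction i with
    | zero => simp
    | succ i ih =>
      rw [pow_succ', mul_assoc]
      refine (mul_le_mul_right ih _).trans ?_
      rw [Submodule.sup_mul, Submodule.mul_sup, Submodule.mul_sup]
      refine sup_le (sup_le ?_ ?_) (sup_le ?_ ?_)
      · refine le_sup_of_le_right ?_
        rw [← hTE]
        exact mul_le_mul_right (hPiE i j) T
      · refine le_sup_of_le_right ?_
        rw [hTE]
        exact hTE' _
      · refine le_sup_of_le_left ?_
        rw [pow_succ', mul_assoc]
      · exact le_sup_of_le_right (hPE _)
  have hPk : P ^ k = ⊥ := by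
    rw [hP, Submodule.span_pow]
    simp [hk]
  have key2 : ∀ j, (T ⊔ P) ^ (k * j) * ⊤ ≤ T ^ j * ⊤ := by
    intro j
    induction j with
    | zero => simp
    | succ j ih =>
      rw [mul_add, mul_one, add_comm, pow_add, mul_assoc]
      refine (mul_le_mul_right ih _).trans ((key k j).trans ?_)
      rw [hPk]; simp
  refine ⟨k * n, ?_⟩
  rw [eq_bot_iff]
  intro x hx
  have := key2 n (Submodule.mul_mem_mul hx (Submodule.mem_top (x := (1 : A))))
  rw [hT] at this
  simpa using this

/-- Auxiliary filtration used for iterated commutators. -/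
def adFilt {F A : Type*} [Field F] [Ring A] [Algebra F A] (T : Submodule F A) :
    ℕ → Submodule F A
  | 0 => ⊤
  | k + 1 => T * adFilt T k ⊔ adFilt T k * T

lemma adFilt_eq_bot {F A : Type*} [Field F] [Ring A] [Algebra F A] (T : Submodule F A)
    (n : ℕ) (hT : T ^ n = ⊥) : ∀ k a b : ℕ, 2 * n ≤ a + b + k →
      T ^ a * adFilt T k * T ^ b = ⊥ := by
  intro k
  have hbig : ∀ a, n ≤ a → T ^ a = ⊥ := by
    intro a ha
    obtain ⟨c, rfl⟩ := Nat.exists_eq_add_of_le ha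
    rw [pow_add, hT, Submodule.bot_mul]
  induction k with
  | zero =>
    intro a b hab
    rcases (by omega : n ≤ a ∨ n ≤ b) with h | h
    · simp [hbig a h]
    · simp [hbig b h]
  | succ k ih =>
    intro a b hab
    have h1 := ih (a + 1) b (by omega)
    have h2 := ih a (b + 1) (by omega)
    rw [pow_succ] at h1
    rw [pow_succ'] at h2
    rw [adFilt, Submodule.mul_sup, Submodule.sup_mul]
    simp only [mul_assoc] at h1 h2 ⊢
    rw [h1, h2]; simp

/-- Jacobson's theorem: a bracket-closed set of nilpotent elements spans a nilpotent subspace. -/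
lemma jacobson_nilp {F A : Type*} [Field F] [Ring A] [Algebra F A] [FiniteDimensional F A]
    (S : Set A) (hS : ∀ s ∈ S, ∀ t ∈ S, s * t - t * s ∈ S) (hn : ∀ s ∈ S, IsNilpotent s) :
    ∃ n, (Submodule.span F S) ^ n = ⊥ := by
  let P : Set (Submodule F A) := {T | T ≤ Submodule.span F (S ∩ T) ∧ ∃ n, T ^ n = ⊥}
  have hP : P.Nonempty := ⟨⊥, bot_le, 1, by simp⟩
  obtain ⟨T, ⟨hT1, n, hTn⟩, hmax⟩ := WellFounded.has_min
    (IsWellFounded.wf (α := Submodule F A) (r := (· > ·))) P hP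
  by_cases hST : S ⊆ T
  · refine ⟨n, ?_⟩
    rw [eq_bot_iff, ← hTn]
    exact pow_le_pow_left' (Submodule.span_le.2 hST) n
  exfalso
  obtain ⟨s₀, hs₀S, hs₀T⟩ := Set.not_subset.1 hST
  have hex : ∃ s ∈ S, s ∉ T ∧ ∀ t ∈ S ∩ T, s * t - t * s ∈ T := by
    by_contra hcon
    push Not at hcon
    have hit : ∀ k, ∃ s ∈ S, s ∉ T ∧ s ∈ adFilt T k := by
      intro k
      induction k with
      | zero => exact ⟨s₀, hs₀S, hs₀T, Submodule.mem_top⟩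
      | succ k ih =>
        obtain ⟨s, hs, hsT, hsk⟩ := ih
        obtain ⟨t, ht, htT⟩ := hcon s hs hsT
        refine ⟨s * t - t * s, hS s hs t ht.1, htT, ?_⟩
        rw [adFilt]
        refine Submodule.sub_mem _ ?_ ?_
        · exact Submodule.mem_sup_right (Submodule.mul_mem_mul hsk ht.2)
        · exact Submodule.mem_sup_left (Submodule.mul_mem_mul ht.2 hsk)
    obtain ⟨s, hs, hsT, hsk⟩ := hit (2 * n)
    have := adFilt_eq_bot T n hTn (2 * n) 0 0 (by omega)
    rw [pow_zero, one_mul, mul_one] at this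
    rw [this, Submodule.mem_bot] at hsk
    exact hsT (hsk ▸ T.zero_mem)
  obtain ⟨s, hs, hsT, hst⟩ := hex
  have hst' : ∀ t ∈ T, s * t - t * s ∈ T := by
    intro t ht
    have := hT1 ht
    induction this using Submodule.span_induction with
    | mem x hx => exact hst x hx
    | zero => simp
    | add x y hx hy h1 h2 =>
      have h3 := T.add_mem (h1 (Submodule.span_le.2 Set.inter_subset_right hx)) (h2 (Submodule.span_le.2 Set.inter_subset_right hy))
      convert h3 using 1
      noncomm_ring
    | smul c x hx h1 =>
      have h3 := T.smul_mem c (h1 (Submodule.span_le.2 Set.inter_subset_right hx))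
      convert h3 using 1
      simp [smul_sub]
  refine hmax (T ⊔ Submodule.span F {s}) ⟨?_, nilp_sup_span T s (hn s hs) n hTn hst'⟩ ?_
  · refine sup_le ?_ ?_
    · exact hT1.trans (Submodule.span_mono (Set.inter_subset_inter_right _ (by
        intro x hx; exact Submodule.mem_sup_left hx)))
    · rw [Submodule.span_singleton_le_iff_mem]
      exact Submodule.subset_span ⟨hs, Submodule.mem_sup_right
        (Submodule.mem_span_singleton_self s)⟩
  · refine lt_of_le_of_ne le_sup_left ?_
    intro h
    apply hsT
    rw [h]
    exact Submodule.mem_sup_right (Submodule.mem_span_singleton_self s)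

/-! ### Common eigenvectors and triangulation over an algebraically closed field -/

lemma exists_common_eigenvector {K V ι : Type*} [Field K] [IsAlgClosed K] [AddCommGroup V]
    [Module K V] [FiniteDimensional K V] [Nontrivial V]
    (ρ : ι → Module.End K V) (br : ι → ι → ι)
    (hbr : ∀ a b, ρ (br a b) = ρ a * ρ b - ρ b * ρ a)
    (hnil : ∀ a b, IsNilpotent (ρ (br a b))) :
    ∃ v : V, v ≠ 0 ∧ ∀ a, ∃ c : K, ρ a v = c • v := by
  classical
  let S : Set (Module.End K V) := {f | ∃ a b, f = ρ (br a b)}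
  have hex : ∃ n, (Submodule.span K S) ^ n = ⊥ := by
    apply jacobson_nilp
    · rintro _ ⟨a, b, rfl⟩ _ ⟨c, d, rfl⟩
      exact ⟨br a b, br c d, (hbr _ _).symm⟩
    · rintro _ ⟨a, b, rfl⟩
      exact hnil a b
  obtain ⟨w, hw0, hw⟩ : ∃ w : V, w ≠ 0 ∧ ∀ a b, ρ (br a b) w = 0 := by
    have hfind := Nat.find_spec hex
    rcases hn : Nat.find hex with _ | n
    · rw [hn, pow_zero] at hfind
      have h1 : (1 : Module.End K V) ∈ (1 : Submodule K (Module.End K V)) :=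
        Submodule.one_le.1 le_rfl
      rw [hfind, Submodule.mem_bot] at h1
      exact absurd h1 one_ne_zero
    · have hne : Submodule.span K S ^ n ≠ ⊥ := Nat.find_min hex (by omega)
      obtain ⟨f, hf, hf0⟩ := Submodule.exists_mem_ne_zero_of_ne_bot hne
      obtain ⟨u, hu⟩ : ∃ u, f u ≠ 0 := by
        by_contra h
        push Not at h
        exact hf0 (LinearMap.ext h)
      refine ⟨f u, hu, fun a b => ?_⟩
      have : ρ (br a b) * f ∈ Submodule.span K S ^ (n + 1) := by
        rw [pow_succ']
        exact Submodule.mul_mem_mul (Submodule.subset_span ⟨a, b, rfl⟩) hf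
      rw [hn] at hfind
      rw [hfind, Submodule.mem_bot] at this
      exact LinearMap.congr_fun this u
  let W : Submodule K V :=
    { carrier := {v | ∀ a b, ρ (br a b) v = 0}
      add_mem' := by
        intro x y hx hy a b
        rw [map_add, hx a b, hy a b, add_zero]
      zero_mem' := by intro a b; simp
      smul_mem' := by
        intro c x hx a b
        rw [map_smul, hx a b, smul_zero] }
  have hWinv : ∀ a, ∀ v ∈ W, ρ a v ∈ W := by
    intro a v hv c d
    have h1 := hv (br c d) a
    rw [hbr (br c d) a] at h1
    simp only [LinearMap.sub_apply, Module.End.mul_apply, hv c d, map_zero, sub_zero] at h1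
    exact h1
  let P : Set (Submodule K V) := {U | U ≠ ⊥ ∧ U ≤ W ∧ ∀ a, ∀ v ∈ U, ρ a v ∈ U}
  have hP : P.Nonempty := ⟨W, fun h => hw0 (by
    have : w ∈ W := hw
    rw [h] at this
    simpa using this), le_rfl, hWinv⟩
  obtain ⟨U, ⟨hU0, hUW, hUinv⟩, hmin⟩ := WellFounded.has_min
    (IsWellFounded.wf (α := Submodule K V) (r := (· < ·))) P hP
  obtain ⟨v, hvU, hv0⟩ := Submodule.exists_mem_ne_zero_of_ne_bot hU0
  refine ⟨v, hv0, fun a => ?_⟩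
  have : Nontrivial U := (Submodule.nontrivial_iff_ne_bot).2 hU0
  obtain ⟨c, hc⟩ := Module.End.exists_eigenvalue ((ρ a).restrict (hUinv a))
  obtain ⟨u, hu⟩ := hc.exists_hasEigenvector
  refine ⟨c, ?_⟩
  have hu1 : ρ a u = c • (u : V) := by
    have := hu.apply_eq_smul
    exact congrArg Subtype.val this
  have hu2 : (u : V) ≠ 0 := fun h => hu.2 (Subtype.ext h)
  have hE : U ⊓ Module.End.eigenspace (ρ a) c ∈ P := by
    refine ⟨?_, inf_le_left.trans hUW, ?_⟩
    · intro h
      have : (u : V) ∈ U ⊓ Module.End.eigenspace (ρ a) c :=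
        ⟨u.2, Module.End.mem_eigenspace_iff.2 hu1⟩
      rw [h] at this
      exact hu2 (by simpa using this)
    · rintro b x ⟨hx1, hx2⟩
      refine ⟨hUinv b x hx1, Module.End.mem_eigenspace_iff.2 ?_⟩
      have h1 := hUW hx1 a b
      rw [hbr a b] at h1
      simp only [LinearMap.sub_apply, Module.End.mul_apply] at h1
      rw [sub_eq_zero.1 h1, Module.End.mem_eigenspace_iff.1 hx2, map_smul]
  have hnl := hmin _ hE
  have heq : U ⊓ Module.End.eigenspace (ρ a) c = U := by
    by_contra h
    exact hnl (lt_of_le_of_ne inf_le_left h)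
  have hv : v ∈ U ⊓ Module.End.eigenspace (ρ a) c := heq.symm ▸ hvU
  exact Module.End.mem_eigenspace_iff.1 hv.2

lemma exists_triangular_basis {K ι : Type*} [Field K] [IsAlgClosed K] (br : ι → ι → ι) (n : ℕ) :
    ∀ (V : Type*) [AddCommGroup V] [Module K V] [FiniteDimensional K V]
    (_ : Module.finrank K V = n) (ρ : ι → Module.End K V)
    (_ : ∀ a b, ρ (br a b) = ρ a * ρ b - ρ b * ρ a)
    (_ : ∀ a b, IsNilpotent (ρ (br a b))),
    ∃ b : Basis (Fin n) K V, ∀ a, ∀ i j : Fin n, j < i → b.repr (ρ a (b j)) i = 0 := by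
  induction n with
  | zero =>
    intro V _ _ _ hd ρ _ _
    exact ⟨Module.finBasisOfFinrankEq K V hd, fun a i => i.elim0⟩
  | succ n ih =>
    intro V _ _ _ hd ρ hbr hnil
    have : Nontrivial V := Module.nontrivial_of_finrank_pos (R := K) (by omega)
    obtain ⟨v, hv0, hv⟩ := exists_common_eigenvector ρ br hbr hnil
    let W : Submodule K V := K ∙ v
    have hinv : ∀ a, W ≤ W.comap (ρ a) := by
      intro a
      rw [Submodule.span_singleton_le_iff_mem]
      obtain ⟨c, hc⟩ := hv a
      exact Submodule.mem_span_singleton.2 ⟨c, hc.symm⟩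
    have hW1 : Module.finrank K W = 1 := finrank_span_singleton hv0
    have hQ : Module.finrank K (V ⧸ W) = n := by
      have := Submodule.finrank_quotient_add_finrank W
      omega
    obtain ⟨bQ, hbQ⟩ := ih (V ⧸ W) hQ (fun a => W.mapQ W (ρ a) (hinv a))
      (by
        intro a b
        apply LinearMap.ext
        intro x
        obtain ⟨x, rfl⟩ := Submodule.Quotient.mk_surjective W x
        simp [Submodule.mapQ_apply, hbr a b])
      (by
        intro a b
        obtain ⟨k, hk⟩ := hnil a b
        refine ⟨k, ?_⟩
        rw [← Submodule.mapQ_pow]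
        apply LinearMap.ext
        intro x
        obtain ⟨x, rfl⟩ := Submodule.Quotient.mk_surjective W x
        simp [hk])
    let bW : Basis (Fin 1) K W := Module.finBasisOfFinrankEq K W hW1
    let e : Fin 1 ⊕ Fin n ≃ Fin (n + 1) := finSumFinEquiv.trans (finCongr (add_comm 1 n))
    have he1 : ∀ i : Fin 1, (e (Sum.inl i) : ℕ) = 0 := by
      intro i; simp [e]
    have he2 : ∀ i : Fin n, (e (Sum.inr i) : ℕ) = 1 + i := by
      intro i; simp [e, add_comm]
    refine ⟨(Module.Basis.sumQuot bW bQ).reindex e, ?_⟩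
    intro a i j hij
    obtain ⟨i, rfl⟩ := e.surjective i
    obtain ⟨j, rfl⟩ := e.surjective j
    rw [Fin.lt_def] at hij
    rw [Module.Basis.repr_reindex_apply, Module.Basis.reindex_apply]
    simp only [Equiv.symm_apply_apply]
    rcases i with i | i
    · rw [he1] at hij; omega
    rw [Module.Basis.sumQuot_repr_inr]
    rcases j with j | j
    · rw [Module.Basis.sumQuot_inl]
      have : W.mkQ (ρ a (bW j)) = 0 := by
        rw [Submodule.mkQ_apply, Submodule.Quotient.mk_eq_zero]
        exact hinv a (bW j).2
      rw [this]; simp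
    · rw [he2, he2] at hij
      have h := hbQ a i j (by rw [Fin.lt_def]; omega)
      rw [← Module.Basis.sumQuot_inr bW bQ j] at h
      exact h

/-! ### Leibniz algebra part -/

section LeibnizProof

open scoped TensorProduct

variable {F : Type*} [Field F] {L : Type*} [AddCommGroup L] [Module F L]

lemma leib_mul {m : L →ₗ[F] L →ₗ[F] L} (hm : IsLeibniz m) (a b : L) :
    (m (m a b) : Module.End F L) = (m a : Module.End F L) * m b - (m b : Module.End F L) * m a := by
  apply LinearMap.ext
  intro c
  have := hm a b c
  simp only [LinearMap.sub_apply, Module.End.mul_apply]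
  rw [this]; abel

/-- If all products act nilpotently from the left, then `L` is triangulable on itself. -/
lemma tri_of_nil [FiniteDimensional F L] {m : L →ₗ[F] L →ₗ[F] L} (hm : IsLeibniz m)
    (h : ∀ x y, IsNilpotent (m (m x y) : Module.End F L)) :
    IsTriangulableOn m (⊤ : Submodule F L) := by
  let K := AlgebraicClosure F
  obtain ⟨b, hb⟩ := exists_triangular_basis (K := K) (fun x y : L => m x y)
    (Module.finrank K (K ⊗[F] L)) (K ⊗[F] L) rfl
    (fun x => LinearMap.baseChange K (m x))
    (by
      intro x y
      rw [leib_mul hm, LinearMap.baseChange_sub]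
      rw [LinearMap.baseChange_mul, LinearMap.baseChange_mul])
    (by
      intro x y
      obtain ⟨k, hk⟩ := h x y
      refine ⟨k, ?_⟩
      rw [← LinearMap.baseChange_pow, hk, LinearMap.baseChange_zero])
  refine ⟨_, b, fun x _ i j hij => ?_⟩
  rw [LinearMap.toMatrix_apply]
  exact hb x i j hij

/-- Products inside a triangulable subspace act nilpotently. -/
lemma nil_of_tri {m : L →ₗ[F] L →ₗ[F] L} (hm : IsLeibniz m)
    (S : Submodule F L) (hS : IsTriangulableOn m S) :
    ∀ z ∈ mprod m S S, IsNilpotent (m z : Module.End F L) := by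
  obtain ⟨n, b, hb⟩ := hS
  intro z hz
  let X : L → Matrix (Fin n) (Fin n) (AlgebraicClosure F) :=
    fun x => LinearMap.toMatrix b b (LinearMap.baseChange (AlgebraicClosure F) (m x))
  have hXadd : ∀ x y, X (x + y) = X x + X y := by
    intro x y; simp [X, LinearMap.baseChange_add]
  have hXmul : ∀ x y, X (m x y) = X x * X y - X y * X x := by
    intro x y
    simp only [X]
    rw [leib_mul hm, LinearMap.baseChange_sub, LinearMap.baseChange_mul,
      LinearMap.baseChange_mul]
    refine (map_sub (LinearMap.toMatrix b b) _ _).trans ?_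
    rw [LinearMap.toMatrix_mul, LinearMap.toMatrix_mul]
  have hup : ∀ A B : Matrix (Fin n) (Fin n) (AlgebraicClosure F), (∀ i j, j < i → A i j = 0) →
      (∀ i j, j < i → B i j = 0) → ∀ i j, j ≤ i → (A * B) i j = if i = j then A i i * B i i else 0 := by
    intro A B hA hB i j hij
    rw [Matrix.mul_apply]
    split_ifs with h
    · subst h
      apply Finset.sum_eq_single
      · intro k _ hk
        rcases lt_or_gt_of_ne hk with h | h
        · rw [hA i k h, zero_mul]
        · rw [hB k i h, mul_zero]
      · simp
    · apply Finset.sum_eq_zero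
      intro k _
      have hlt : j < i := lt_of_le_of_ne hij (Ne.symm h)
      rcases lt_or_ge k i with h1 | h1
      · rw [hA i k h1, zero_mul]
      · rw [hB k j (hlt.trans_le h1), mul_zero]
  have hstrict : ∀ i j, j ≤ i → X z i j = 0 := by
    refine Submodule.map₂_le (p := S) (q := S) (f := m) (r :=
      { carrier := {z | ∀ i j, j ≤ i → X z i j = 0}
        add_mem' := ?_
        zero_mem' := ?_
        smul_mem' := ?_ }) |>.2 ?_ hz
    · intro x y hx hy i j hij
      rw [hXadd, Matrix.add_apply, hx i j hij, hy i j hij, add_zero]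
    · intro i j _
      simp [X]
    · intro c x hx i j hij
      have : X (c • x) = (algebraMap F (AlgebraicClosure F) c) • X x := by
        simp only [X]
        rw [map_smul, LinearMap.baseChange_smul, ← map_smul, algebraMap_smul]
      rw [this, Matrix.smul_apply, hx i j hij, smul_zero]
    · intro x hx y hy i j hij
      rw [hXmul, Matrix.sub_apply, hup _ _ (hb x hx) (hb y hy) i j hij,
        hup _ _ (hb y hy) (hb x hx) i j hij]
      split_ifs
      · ring
      · ring
  have hpow : X z ^ n = 0 := by
    have h1 := Matrix.aeval_self_charpoly (X z)
    have h2 : (X z).charpoly = ∏ i : Fin n, (Polynomial.X - Polynomial.C (X z i i)) :=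
      Matrix.charpoly_of_isUpperTriangular _ (by
        intro i j hij
        exact hstrict i j (le_of_lt hij))
    rw [h2] at h1
    simpa [hstrict _ _ le_rfl] using h1
  refine ⟨n, ?_⟩
  have hbc : LinearMap.baseChange (AlgebraicClosure F) ((m z : Module.End F L) ^ n) = 0 := by
    rw [LinearMap.baseChange_pow]
    apply (LinearMap.toMatrix b b).injective
    rw [← LinearMap.toMatrix_pow, map_zero]
    exact hpow
  apply LinearMap.ext
  intro v
  have h1 := LinearMap.congr_fun hbc ((1 : (AlgebraicClosure F)) ⊗ₜ[F] v)
  rw [LinearMap.baseChange_tmul, LinearMap.zero_apply] at h1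
  have hinj : Function.Injective (fun v : L => (1 : (AlgebraicClosure F)) ⊗ₜ[F] v) :=
    Module.FaithfullyFlat.tensorProduct_mk_injective L
  exact hinj (by simpa using h1)

/-- The Fitting null component of a left multiplication. -/
def fitNull (D : Module.End F L) : Submodule F L where
  carrier := {x | ∃ k, (D ^ k) x = 0}
  add_mem' := by
    rintro x y ⟨k, hk⟩ ⟨l, hl⟩
    refine ⟨k + l, ?_⟩
    rw [map_add, pow_add, Module.End.mul_apply, Module.End.mul_apply, hl, map_zero, add_zero,
      ← Module.End.mul_apply, ← pow_add, add_comm, pow_add, Module.End.mul_apply, hk, map_zero]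
  zero_mem' := ⟨0, map_zero _⟩
  smul_mem' := by
    rintro c x ⟨k, hk⟩
    exact ⟨k, by rw [map_smul, hk, smul_zero]⟩

lemma fitNull_subalg {m : L →ₗ[F] L →ₗ[F] L} (hm : IsLeibniz m) (a : L) :
    IsSubalg m (fitNull (m a)) := by
  have key : ∀ N k l : ℕ, k + l = N → ∀ x y, ((m a : Module.End F L) ^ k) x = 0 →
      ((m a : Module.End F L) ^ l) y = 0 → ((m a : Module.End F L) ^ N) (m x y) = 0 := by
    intro N
    induction N with
    | zero =>
      intro k l hkl x y hx hy
      obtain rfl : k = 0 := by omega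
      have : x = 0 := hx
      simp [this]
    | succ N ih =>
      intro k l hkl x y hx hy
      rcases k with _ | k
      · have : x = 0 := hx
        simp [this]
      rcases l with _ | l
      · have : y = 0 := hy
        simp [this]
      have e1 : ((m a : Module.End F L) ^ k) (m a x) = 0 := by
        rw [pow_succ] at hx; exact hx
      have e2 : ((m a : Module.End F L) ^ l) (m a y) = 0 := by
        rw [pow_succ] at hy; exact hy
      rw [pow_succ, Module.End.mul_apply, hm a x y, map_add,
        ih k (l + 1) (by omega) _ _ e1 hy, ih (k + 1) l (by omega) _ _ hx e2, add_zero]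
  rintro x ⟨k, hk⟩ y ⟨l, hl⟩
  exact ⟨k + l, key _ k l rfl x y hk hl⟩

lemma exists_max_subalg [FiniteDimensional F L] (m : L →ₗ[F] L →ₗ[F] L) (S : Submodule F L)
    (hS : IsSubalg m S) (hne : S ≠ ⊤) : ∃ M, IsMaxSubalg m M ∧ S ≤ M := by
  obtain ⟨M, ⟨hM1, hM2, hM3⟩, hmax⟩ := WellFounded.has_min
    (IsWellFounded.wf (α := Submodule F L) (r := (· > ·)))
    {T | IsSubalg m T ∧ T ≠ ⊤ ∧ S ≤ T} ⟨S, hS, hne, le_rfl⟩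
  refine ⟨M, ⟨hM1, hM2, fun T hT hMT => ?_⟩, hM3⟩
  by_contra hcon
  push Not at hcon
  exact hmax T ⟨hT, hcon.2, hM3.trans hMT⟩ (lt_of_le_of_ne hMT (Ne.symm hcon.1))

/-- An ideal that is nil on `L` is contained in the Frattini subalgebra. -/
lemma nil_ideal_le_frattini [FiniteDimensional F L] {m : L →ₗ[F] L →ₗ[F] L} (hm : IsLeibniz m)
    (hproper : ∀ S : Submodule F L, IsSubalg m S → S ≠ ⊤ → IsTriangulableOn m S)
    (hnot : ¬ IsTriangulableOn m (⊤ : Submodule F L))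
    (J : Submodule F L) (hJ : IsIdeal m J) (hnil : IsNilOn m J) : J ≤ frattiniSub m := by
  refine le_sInf ?_
  rintro M ⟨hM1, hM2, hM3⟩
  by_contra hJM
  apply hnot
  have htop : M ⊔ J = ⊤ := by
    have hsub : IsSubalg m (M ⊔ J) := by
      intro x hx y hy
      obtain ⟨u, hu, j, hj, rfl⟩ := Submodule.mem_sup.1 hx
      obtain ⟨u', hu', j', hj', rfl⟩ := Submodule.mem_sup.1 hy
      have : m (u + j) (u' + j') = m u u' + (m (u + j) j' + m j u') := by
        simp only [map_add, LinearMap.add_apply]; abel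
      rw [this]
      exact Submodule.add_mem_sup (hM1 u hu u' hu')
        (J.add_mem (hJ _ _ hj').1 (hJ _ _ hj).2)
    rcases hM3 _ hsub le_sup_left with h | h
    · exact absurd (h ▸ le_sup_right) hJM
    · exact h
  have hMn := nil_of_tri hm M (hproper M hM1 hM2)
  obtain ⟨n, hn⟩ := jacobson_nilp (F := F) (A := Module.End F L) {f | ∃ j ∈ J, f = m j}
    (by
      rintro _ ⟨j, hj, rfl⟩ _ ⟨j', hj', rfl⟩
      exact ⟨m j j', (hJ j j' hj').1, (leib_mul hm j j').symm⟩)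
    (by
      rintro _ ⟨j, hj, rfl⟩
      exact hnil j hj)
  have hspan : Submodule.span F {f : Module.End F L | ∃ j ∈ J, f = m j} = J.map m := by
    apply le_antisymm
    · rw [Submodule.span_le]
      rintro _ ⟨j, hj, rfl⟩
      exact Submodule.mem_map_of_mem hj
    · rintro _ ⟨j, hj, rfl⟩
      exact Submodule.subset_span ⟨j, hj, rfl⟩
  rw [hspan] at hn
  apply tri_of_nil hm
  intro x y
  obtain ⟨u, hu, j, hj, rfl⟩ := Submodule.mem_sup.1 (htop ▸ Submodule.mem_top : x ∈ M ⊔ J)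
  obtain ⟨u', hu', j', hj', rfl⟩ := Submodule.mem_sup.1 (htop ▸ Submodule.mem_top : y ∈ M ⊔ J)
  have hxy : m (u + j) (u' + j') = (m (u + j) j' + m j u') + m u u' := by
    simp only [map_add, LinearMap.add_apply]; abel
  have hjj : m (u + j) j' + m j u' ∈ J := J.add_mem (hJ _ _ hj').1 (hJ _ _ hj).2
  obtain ⟨N, hN⟩ := nilp_sup_span (J.map m) (m (m u u') : Module.End F L)
    (hMn _ (Submodule.apply_mem_map₂ m hu hu')) n hn (by
      rintro _ ⟨t, ht, rfl⟩
      rw [← leib_mul hm]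
      exact Submodule.mem_map_of_mem (hJ _ _ ht).1)
  refine ⟨N, ?_⟩
  have : (m (m (u + j) (u' + j')) : Module.End F L) ∈
      J.map m ⊔ Submodule.span F {(m (m u u') : Module.End F L)} := by
    rw [hxy, map_add]
    exact Submodule.add_mem_sup (Submodule.mem_map_of_mem hjj)
      (Submodule.mem_span_singleton_self _)
  have h2 := Submodule.pow_mem_pow _ this N
  rw [hN] at h2
  simpa using h2

/-- The square of an ideal is an ideal. -/
lemma sq_ideal {m : L →ₗ[F] L →ₗ[F] L} (hm : IsLeibniz m) (I : Submodule F L)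
    (hI : IsIdeal m I) : IsIdeal m (mprod m I I) := by
  intro x y hy
  constructor
  · refine Submodule.map₂_le (r := (mprod m I I).comap (m x)) |>.2 ?_ hy
    intro b hb c hc
    rw [Submodule.mem_comap, hm x b c]
    exact Submodule.add_mem _ (Submodule.apply_mem_map₂ m (hI x b hb).1 hc)
      (Submodule.apply_mem_map₂ m hb (hI x c hc).1)
  · refine Submodule.map₂_le (r := (mprod m I I).comap (m.flip x)) |>.2 ?_ hy
    intro b hb c hc
    rw [Submodule.mem_comap, LinearMap.flip_apply]
    have h1 : m (m b c) x = m b (m c x) - m c (m b x) := by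
      rw [hm b c x]; abel
    rw [h1]
    exact Submodule.sub_mem _ (Submodule.apply_mem_map₂ m hb (hI x c hc).2)
      (Submodule.apply_mem_map₂ m hc (hI x b hb).2)

/-- Every proper ideal is nil on `L`. -/
lemma proper_ideal_nil [FiniteDimensional F L] {m : L →ₗ[F] L →ₗ[F] L} (hm : IsLeibniz m)
    (hproper : ∀ S : Submodule F L, IsSubalg m S → S ≠ ⊤ → IsTriangulableOn m S)
    (hnot : ¬ IsTriangulableOn m (⊤ : Submodule F L))
    (I : Submodule F L) (hI : IsIdeal m I) (hne : I ≠ ⊤) : IsNilOn m I := by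
  have hsub : IsSubalg m I := fun x _ y hy => (hI x y hy).1
  have hsq : mprod m I I ≤ frattiniSub m :=
    nil_ideal_le_frattini hm hproper hnot _ (sq_ideal hm I hI)
      (nil_of_tri hm I (hproper I hsub hne))
  intro a ha
  obtain ⟨n, hn2, hn⟩ := ((Filter.eventually_ge_atTop 2).and
    (LinearMap.eventually_isCompl_ker_pow_range_pow (m a : Module.End F L))).exists
  have hrange : LinearMap.range ((m a : Module.End F L) ^ n) ≤ mprod m I I := by
    rintro _ ⟨v, rfl⟩
    obtain ⟨k, rfl⟩ := Nat.exists_eq_add_of_le hn2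
    have : ∀ k, ((m a : Module.End F L) ^ (2 + k)) v ∈ mprod m I I := by
      intro k
      induction k with
      | zero =>
        rw [add_zero, pow_two, Module.End.mul_apply]
        exact Submodule.apply_mem_map₂ m ha (hI v a ha).2
      | succ k ih =>
        rw [← add_assoc, pow_succ', Module.End.mul_apply]
        exact (sq_ideal hm I hI a _ ih).1
    exact this k
  have hfit : fitNull (m a) = ⊤ := by
    by_contra hcon
    obtain ⟨M, hM, hle⟩ := exists_max_subalg m _ (fitNull_subalg hm a) hcon
    apply hM.2.1
    rw [eq_top_iff, ← hn.sup_eq_top]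
    refine sup_le ?_ ?_
    · intro v hv
      exact hle ⟨n, hv⟩
    · exact (hrange.trans hsq).trans (sInf_le hM)
  rw [Module.End.isNilpotent_iff_of_finite]
  intro v
  exact (hfit ▸ Submodule.mem_top : v ∈ fitNull (m a))

lemma frattiniIdeal_ideal (m : L →ₗ[F] L →ₗ[F] L) : IsIdeal m (frattiniIdeal m) := by
  intro x y hy
  constructor
  · refine (sSup_le ?_ : frattiniIdeal m ≤ (frattiniIdeal m).comap (m x)) hy
    rintro I hI z hz
    exact (le_sSup hI : I ≤ frattiniIdeal m) (hI.1 x z hz).1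
  · refine (sSup_le ?_ : frattiniIdeal m ≤ (frattiniIdeal m).comap (m.flip x)) hy
    rintro I hI z hz
    exact (le_sSup hI : I ≤ frattiniIdeal m) (hI.1 x z hz).2

end LeibnizProof

/-- Let `L` be a finite-dimensional Leibniz algebra that is minimally
non-triangulable: every proper subalgebra of `L` is triangulable on `L`, but `L` itself
is not triangulable on itself. Then `L` is two-generated and `L/φ(L)` is a simple
Leibniz algebra. Simplicity of the quotient `L/φ(L)` is expressed via the lattice
correspondence: the quotient is nonzero (`φ(L) ≠ ⊤`), its multiplication is nonzero
(`L·L ⊄ φ(L)`), and it has no proper nonzero ideals (every ideal of `L` containing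
`φ(L)` equals `φ(L)` or `L`). -/
theorem minimally_non_triangulable_two_generated_and_simple_quotient
    {F : Type*} [Field F] {L : Type*} [AddCommGroup L] [Module F L]
    [FiniteDimensional F L]
    (m : L →ₗ[F] L →ₗ[F] L) (hm : IsLeibniz m)
    (hproper : ∀ S : Submodule F L, IsSubalg m S → S ≠ ⊤ → IsTriangulableOn m S)
    (hnot : ¬ IsTriangulableOn m (⊤ : Submodule F L)) :
    (∃ x y : L, genBy m {x, y} = ⊤) ∧
    frattiniIdeal m ≠ ⊤ ∧
    ¬ (mprod m ⊤ ⊤ ≤ frattiniIdeal m) ∧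
    (∀ I : Submodule F L, IsIdeal m I → frattiniIdeal m ≤ I →
      I = frattiniIdeal m ∨ I = ⊤) := by
  have hbot : (⊥ : Submodule F L) ≠ ⊤ := by
    intro h
    apply hnot
    apply tri_of_nil hm
    intro x y
    have : m x y = 0 := by
      have h1 : m x y ∈ (⊤ : Submodule F L) := Submodule.mem_top
      rw [← h] at h1
      simpa using h1
    rw [this, map_zero]
    exact IsNilpotent.zero
  have hphi : frattiniIdeal m ≠ ⊤ := by
    intro h
    obtain ⟨M, hM, -⟩ := exists_max_subalg m ⊥ (by
      intro x hx y hy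
      rw [Submodule.mem_bot] at hx
      simp [hx]) hbot
    apply hM.2.1
    rw [eq_top_iff, ← h]
    refine sSup_le ?_
    rintro I ⟨-, hI⟩
    exact hI.trans (sInf_le hM)
  have hnilphi := proper_ideal_nil hm hproper hnot _ (frattiniIdeal_ideal m) hphi
  refine ⟨?_, hphi, ?_, ?_⟩
  · by_contra hcon
    push Not at hcon
    apply hnot
    apply tri_of_nil hm
    intro x y
    have hsub : IsSubalg m (genBy m {x, y}) := by
      intro u hu v hv
      rw [genBy, Submodule.mem_sInf] at hu hv ⊢
      intro S hS
      exact hS.1 u (hu S hS) v (hv S hS)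
    have hmem : ∀ u ∈ ({x, y} : Set L), u ∈ genBy m {x, y} := by
      intro u hu
      rw [genBy, Submodule.mem_sInf]
      intro S hS
      exact hS.2 hu
    exact nil_of_tri hm _ (hproper _ hsub (hcon x y)) _
      (Submodule.apply_mem_map₂ m (hmem x (by simp)) (hmem y (by simp)))
  · intro hle
    apply hnot
    apply tri_of_nil hm
    intro x y
    exact hnilphi _ (hle (Submodule.apply_mem_map₂ m Submodule.mem_top Submodule.mem_top))
  · intro I hI hle
    by_cases htop : I = ⊤
    · exact Or.inr htop
    · left
      refine le_antisymm (le_sSup ⟨hI, ?_⟩) hle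
      exact nil_ideal_le_frattini hm hproper hnot I hI
        (proper_ideal_nil hm hproper hnot I hI htop)
end
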